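/- arXiv:1010.3284 — 11 statements merged into one kernel-verified Lean document; each statement's English description precedes it below -/
import Mathlib

section
/- Fix h ∈ ℝ (this statement for the case h arbitrary is part (1) of the extension lemma for Euclidean triangles is not needed; this is the extension lemma itself). Define θ̃₁ : ℝ³_{>0} → ℝ by θ̃₁(l) = θ₁(l) when l ∈ Ω, θ̃₁(l) = π when l₁ ≥ l₂ + l₃, and θ̃₁(l) = 0 when l₂ ≥ l₁ + l₃ or l₃ ≥ l₁ + l₂. Then θ̃₁ is continuous on ℝ³_{>0}. (Equivalently, the Euclidean inner angle function θ₁ defined on Ω extends continuously by constant functions to all of ℝ³_{>0}.) -/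
/-!
The extension is continuous because the total function `Real.arccos` is continuous on `ℝ` and
constant outside `[-1, 1]`. The argument `(l₁² + l₂² - l₀²) / (2 l₁ l₂)` of the law of cosines is
at most `-1` exactly when `l₀ ≥ l₁ + l₂`, and at least `1` exactly when `l₀ ≤ |l₁ - l₂|`. So on the
positive octant the extension by constants agrees with the formula for the angle
(`eucAngle1Ext_eq_eucAngle1`), which is continuous there as its denominator does not vanish.
-/

open Real

/-- The inner angle of a Euclidean triangle with side lengths `l 0, l 1, l 2`
opposite the side of length `l 0`. -/
noncomputable def eucAngle1 (l : Fin 3 → ℝ) : ℝ :=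
  Real.arccos ((l 1 ^ 2 + l 2 ^ 2 - l 0 ^ 2) / (2 * l 1 * l 2))

/-- The extension of `eucAngle1` by constants: it is `π` when `l 0 ≥ l 1 + l 2`,
`0` when `l 1 ≥ l 0 + l 2` or `l 2 ≥ l 0 + l 1`, and the inner angle `θ₁` on the
natural domain `Ω` of strict triangle inequalities. -/
noncomputable def eucAngle1Ext (l : Fin 3 → ℝ) : ℝ :=
  if l 1 + l 2 ≤ l 0 then Real.pi
  else if l 0 + l 2 ≤ l 1 ∨ l 0 + l 1 ≤ l 2 then 0
  else eucAngle1 l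

/-- On the positive octant the extension by constants is the law-of-cosines expression itself:
`Real.arccos` takes the value `π` on `(-∞, -1]` and `0` on `[1, ∞)`, so it already clamps the
angle where a triangle inequality fails. -/
theorem eucAngle1Ext_eq_eucAngle1 {l : Fin 3 → ℝ} (hl : ∀ i, 0 < l i) :
    eucAngle1Ext l = eucAngle1 l := by
  have h0 := hl 0
  have h1 := hl 1
  have h2 := hl 2
  have hd : 0 < 2 * l 1 * l 2 := by positivity
  unfold eucAngle1Ext
  split_ifs with ha hb
  · -- the quotient is at most `-1`, because `(l 1 + l 2) ^ 2 ≤ l 0 ^ 2`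
    refine (Real.arccos_of_le_neg_one ?_).symm
    rw [div_le_iff₀ hd]
    nlinarith
  · -- the quotient is at least `1`, because `l 0 ^ 2 ≤ (l 1 - l 2) ^ 2`
    refine (Real.arccos_eq_zero.2 ?_).symm
    rw [le_div_iff₀ hd]
    rcases hb with hb | hb <;> nlinarith
  · rfl

/-- The Euclidean inner angle function extends continuously by constants to
the whole positive octant `ℝ³_{>0}`. -/
theorem eucAngle1Ext_continuousOn :
    ContinuousOn eucAngle1Ext {l : Fin 3 → ℝ | ∀ i, 0 < l i} := by
  have hc : ContinuousOn eucAngle1 {l : Fin 3 → ℝ | ∀ i, 0 < l i} := by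
    unfold eucAngle1
    refine Real.continuous_arccos.comp_continuousOn (ContinuousOn.div ?_ ?_ ?_)
    · fun_prop
    · fun_prop
    · intro l hl
      have h1 := hl 1
      have h2 := hl 2
      positivity
  exact hc.congr fun l hl => eucAngle1Ext_eq_eucAngle1 hl
end

section
/- Define θ̃₁ : ℝ³_{>0} → ℝ by θ̃₁(l) = θ₁(l) when l ∈ Ω, θ̃₁(l) = π when l₁ ≥ l₂ + l₃, and θ̃₁(l) = 0 when l₂ ≥ l₁ + l₃ or l₃ ≥ l₁ + l₂. Then θ̃₁ is continuous on ℝ³_{>0}. (Equivalently, the hyperbolic inner angle function θ₁ defined on Ω extends continuously by constant functions to all of ℝ³_{>0}.) -/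
/-! Mathlib's `Real.arccos` is continuous on all of `ℝ`, being constantly `π` on `(-∞, -1]` and
constantly `0` on `[1, ∞)`. By the addition formula for `cosh` and its monotonicity in `|x|`, the
argument of `arccos` in `hypAngle1` is `≤ -1` exactly when `l 0 ≥ l 1 + l 2`, and `≥ 1` exactly when
`l 0 ≤ |l 1 - l 2|`. So on the positive octant the extension by constants coincides with the formula
defining `hypAngle1`, which is continuous there because the denominator does not vanish. -/

open Real

/-- The inner angle of a hyperbolic triangle with side lengths `l 0, l 1, l 2`
opposite the side of length `l 0`. -/
noncomputable def hypAngle1 (l : Fin 3 → ℝ) : ℝ :=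
  Real.arccos ((Real.cosh (l 1) * Real.cosh (l 2) - Real.cosh (l 0)) /
    (Real.sinh (l 1) * Real.sinh (l 2)))

/-- The extension of `hypAngle1` by constants: it is `π` when `l 0 ≥ l 1 + l 2`,
`0` when `l 1 ≥ l 0 + l 2` or `l 2 ≥ l 0 + l 1`, and the hyperbolic inner angle
`θ₁` on the natural domain `Ω` of strict triangle inequalities. -/
noncomputable def hypAngle1Ext (l : Fin 3 → ℝ) : ℝ :=
  if l 1 + l 2 ≤ l 0 then Real.pi
  else if l 0 + l 2 ≤ l 1 ∨ l 0 + l 1 ≤ l 2 then 0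
  else hypAngle1 l

/-- The extension is given on the whole positive octant by the formula for `hypAngle1`, since
`Real.arccos` is itself extended by constants outside `[-1, 1]`. -/
theorem hypAngle1Ext_eq_hypAngle1 {l : Fin 3 → ℝ} (hl : ∀ i, 0 < l i) :
    hypAngle1Ext l = hypAngle1 l := by
  have h0 := hl 0
  have h1 := hl 1
  have h2 := hl 2
  have hs : 0 < sinh (l 1) * sinh (l 2) :=
    mul_pos (sinh_pos_iff.2 h1) (sinh_pos_iff.2 h2)
  unfold hypAngle1Ext
  split_ifs with ha hb
  · have hc : cosh (l 1 + l 2) ≤ cosh (l 0) := by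
      rw [cosh_le_cosh, abs_of_pos (by linarith), abs_of_pos h0]
      exact ha
    rw [cosh_add] at hc
    refine (arccos_of_le_neg_one ?_).symm
    rw [div_le_iff₀ hs]
    linarith
  · have hc : cosh (l 0) ≤ cosh (l 1 - l 2) := by
      rw [cosh_le_cosh, abs_of_pos h0, le_abs]
      rcases hb with hb | hb
      · left; linarith
      · right; linarith
    rw [cosh_sub] at hc
    refine (arccos_of_one_le ?_).symm
    rw [le_div_iff₀ hs]
    linarith
  · rfl

/-- The hyperbolic inner angle function extends continuously by constants to
the whole positive octant `ℝ³_{>0}`. -/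
theorem hypAngle1Ext_continuousOn :
    ContinuousOn hypAngle1Ext {l : Fin 3 → ℝ | ∀ i, 0 < l i} := by
  refine ContinuousOn.congr (f := hypAngle1) ?_ fun l hl => hypAngle1Ext_eq_hypAngle1 hl
  unfold hypAngle1
  refine continuous_arccos.comp_continuousOn (ContinuousOn.div (by fun_prop) (by fun_prop) ?_)
  intro l hl
  exact (mul_pos (sinh_pos_iff.2 (hl 1)) (sinh_pos_iff.2 (hl 2))).ne'
end

section
/- Define θ̃₁ : (0,π)³ → ℝ by θ̃₁(l) = θ₁(l) when l ∈ Ω_S, θ̃₁(l) = π when l₁ ≥ l₂ + l₃ or l₁ + l₂ + l₃ ≥ 2π, and θ̃₁(l) = 0 when l₂ ≥ l₁ + l₃ or l₃ ≥ l₁ + l₂. Then θ̃₁ is continuous on (0,π)³. (Equivalently, the spherical inner angle function θ₁ defined on Ω_S extends continuously by constant functions to all of (0,π)³.) -/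
/-! On the open cube the extension by constants is `sphAngle1` itself, because `Real.arccos` is already
extended to the real line by the constants `π` on `(-∞, -1]` and `0` on `[1, ∞)`. Indeed, writing
`a, b, c` for the sides, monotonicity of the cosine on `[0, π]` turns `b + c ≤ a` and
`2π ≤ a + b + c` into `cos a ≤ cos (b + c)`, i.e. the quotient inside the arccosine is at most `-1`,
and turns `a + c ≤ b` and `a + b ≤ c` into `cos (b - c) ≤ cos a`, i.e. that quotient is at least `1`.
Finally `sphAngle1` is continuous on the cube since the sines in the denominator do not vanish there.
-/

open Real

/-- The inner angle of a spherical triangle with side lengths `l 0, l 1, l 2`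
opposite the side of length `l 0`. -/
noncomputable def sphAngle1 (l : Fin 3 → ℝ) : ℝ :=
  Real.arccos ((Real.cos (l 0) - Real.cos (l 1) * Real.cos (l 2)) /
    (Real.sin (l 1) * Real.sin (l 2)))

/-- The extension of `sphAngle1` by constants: it is `π` when `l 0 ≥ l 1 + l 2`
or `l 0 + l 1 + l 2 ≥ 2π`, `0` when `l 1 ≥ l 0 + l 2` or `l 2 ≥ l 0 + l 1`, and
the spherical inner angle `θ₁` on the natural domain `Ω_S`. -/
noncomputable def sphAngle1Ext (l : Fin 3 → ℝ) : ℝ :=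
  if l 1 + l 2 ≤ l 0 ∨ 2 * Real.pi ≤ l 0 + l 1 + l 2 then Real.pi
  else if l 0 + l 2 ≤ l 1 ∨ l 0 + l 1 ≤ l 2 then 0
  else sphAngle1 l

theorem sphAngle1_eq_pi {l : Fin 3 → ℝ} (h1 : 0 < Real.sin (l 1)) (h2 : 0 < Real.sin (l 2))
    (h : Real.cos (l 0) ≤ Real.cos (l 1 + l 2)) : sphAngle1 l = Real.pi := by
  rw [Real.cos_add] at h
  rw [sphAngle1, Real.arccos_eq_pi, div_le_iff₀ (mul_pos h1 h2)]
  linarith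

theorem sphAngle1_eq_zero {l : Fin 3 → ℝ} (h1 : 0 < Real.sin (l 1)) (h2 : 0 < Real.sin (l 2))
    (h : Real.cos (l 1 - l 2) ≤ Real.cos (l 0)) : sphAngle1 l = 0 := by
  rw [Real.cos_sub] at h
  rw [sphAngle1, Real.arccos_eq_zero, le_div_iff₀ (mul_pos h1 h2)]
  linarith

/-- The spherical inner angle function extends continuously by constants to
the whole open cube `(0, π)³`. -/
theorem sphAngle1Ext_continuousOn :
    ContinuousOn sphAngle1Ext {l : Fin 3 → ℝ | ∀ i, l i ∈ Set.Ioo 0 Real.pi} := by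
  have hsin : ∀ l ∈ {l : Fin 3 → ℝ | ∀ i, l i ∈ Set.Ioo 0 Real.pi}, ∀ i, 0 < Real.sin (l i) :=
    fun l hl i => Real.sin_pos_of_mem_Ioo (hl i)
  have hcont : ContinuousOn sphAngle1 {l : Fin 3 → ℝ | ∀ i, l i ∈ Set.Ioo 0 Real.pi} := by
    refine Real.continuous_arccos.comp_continuousOn (ContinuousOn.div ?_ ?_ ?_)
    · fun_prop
    · fun_prop
    · exact fun l hl => (mul_pos (hsin l hl 1) (hsin l hl 2)).ne'
  refine hcont.congr fun l hl => ?_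
  have s1 := hsin l hl 1
  have s2 := hsin l hl 2
  obtain ⟨a0, a1⟩ := hl 0
  obtain ⟨b0, b1⟩ := hl 1
  obtain ⟨c0, c1⟩ := hl 2
  unfold sphAngle1Ext
  split_ifs with h h'
  · refine (sphAngle1_eq_pi s1 s2 ?_).symm
    rcases h with h | h
    · exact Real.cos_le_cos_of_nonneg_of_le_pi (by linarith) a1.le h
    · rw [← Real.cos_two_pi_sub (l 1 + l 2)]
      exact Real.cos_le_cos_of_nonneg_of_le_pi (by linarith) a1.le (by linarith)
  · refine (sphAngle1_eq_zero s1 s2 ?_).symm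
    rcases h' with h | h
    · exact Real.cos_le_cos_of_nonneg_of_le_pi a0.le (by linarith) (by linarith)
    · rw [← Real.cos_neg (l 1 - l 2)]
      exact Real.cos_le_cos_of_nonneg_of_le_pi a0.le (by linarith) (by linarith)
  · rfl
end

section
/- Let w = Σᵢ aᵢ(x) dxᵢ be a continuous 1-form on ℝⁿ, and let A = {x ∈ ℝⁿ : xₙ > 0} and B = {x ∈ ℝⁿ : xₙ < 0}. If the restriction of w to A is closed and the restriction of w to B is closed, then w is closed on all of ℝⁿ. -/
/-!
Put `F x = ∫ w` along `[0, x]`. The claim follows once the integral along every segment `[p, q]`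
equals `F q - F p`, since these differences cancel around a triangle.

* The triangle condition on an open half-space passes to its closure: push the triangle into the
  open half-space by a translation `ε • e` and let `ε → 0⁺`, using that line integrals depend
  continuously on the endpoints (`triangle_of_translates`).
* The origin lies in both closed half-spaces. So if `p` and `q` are in the same closed half-space,
  the triangle `0, p, q` gives the formula.
* Otherwise `[p, q]` meets the hyperplane `xₙ = 0` at a point `m`. The formula holds on `[p, m]` and
  on `[m, q]`, and line integrals are additive along a segment (`lineIntegral_split`).
-/

open Real

/-- The line integral of the continuous 1-form `w = Σᵢ aᵢ(x) dxᵢ` along the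
segment from `p` to `q`. -/
noncomputable def lineIntegral {n : ℕ} (a : (Fin n → ℝ) → (Fin n → ℝ))
    (p q : Fin n → ℝ) : ℝ :=
  ∫ t in (0:ℝ)..1, ∑ i, a ((1 - t) • p + t • q) i * (q i - p i)

/-- A 1-form `w = Σᵢ aᵢ(x) dxᵢ` is closed in `U` if the integral of `w` over the
boundary of every triangle whose convex hull lies in `U` vanishes. -/
def IsClosedOneForm {n : ℕ} (a : (Fin n → ℝ) → (Fin n → ℝ))
    (U : Set (Fin n → ℝ)) : Prop :=
  ∀ p q r : Fin n → ℝ, convexHull ℝ {p, q, r} ⊆ U →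
    lineIntegral a p q + lineIntegral a q r + lineIntegral a r p = 0

/-- Affine change of variables: a line integral over a (possibly reversed) piece of `[p, q]` is the
integral of the pullback of the form over the corresponding parameter interval. -/
lemma lineIntegral_piece {n : ℕ} (a : (Fin n → ℝ) → (Fin n → ℝ)) (p q : Fin n → ℝ) (u v : ℝ) :
    lineIntegral a ((1 - u) • p + u • q) ((1 - v) • p + v • q) =
      ∫ t in u..v, ∑ i, a ((1 - t) • p + t • q) i * (q i - p i) := by
  have h := intervalIntegral.mul_integral_comp_mul_add (a := 0) (b := 1)
    (f := fun t : ℝ => ∑ i, a ((1 - t) • p + t • q) i * (q i - p i)) (v - u) u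
  rw [show (v - u) * 0 + u = u by ring, show (v - u) * 1 + u = v by ring] at h
  rw [← h, ← intervalIntegral.integral_const_mul, lineIntegral]
  refine intervalIntegral.integral_congr fun t _ => ?_
  simp only [Finset.mul_sum]
  refine Finset.sum_congr rfl fun i _ => ?_
  have hpt : (1 - t) • ((1 - u) • p + u • q) + t • ((1 - v) • p + v • q) =
      (1 - ((v - u) * t + u)) • p + ((v - u) * t + u) • q := by
    module
  rw [hpt]
  simp only [Pi.add_apply, Pi.smul_apply, smul_eq_mul]
  ring

lemma lineIntegral_symm {n : ℕ} (a : (Fin n → ℝ) → (Fin n → ℝ)) (p q : Fin n → ℝ) :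
    lineIntegral a q p = -lineIntegral a p q := by
  have h := lineIntegral_piece a p q 1 0
  rw [intervalIntegral.integral_symm] at h
  simpa [lineIntegral] using h

lemma lineIntegral_split {n : ℕ} {a : (Fin n → ℝ) → (Fin n → ℝ)} (ha : Continuous a)
    (p q : Fin n → ℝ) (s : ℝ) :
    lineIntegral a p q =
      lineIntegral a p ((1 - s) • p + s • q) + lineIntegral a ((1 - s) • p + s • q) q := by
  have hc : Continuous fun t : ℝ => ∑ i, a ((1 - t) • p + t • q) i * (q i - p i) := by fun_prop
  have h0 := lineIntegral_piece a p q 0 s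
  have h1 := lineIntegral_piece a p q s 1
  simp only [sub_zero, one_smul, zero_smul, add_zero, sub_self, zero_add] at h0 h1
  rw [h0, h1, intervalIntegral.integral_add_adjacent_intervals (hc.intervalIntegrable _ _)
    (hc.intervalIntegrable _ _), lineIntegral]

lemma continuous_lineIntegral_translate {n : ℕ} {a : (Fin n → ℝ) → (Fin n → ℝ)}
    (ha : Continuous a) (p q e : Fin n → ℝ) :
    Continuous fun ε : ℝ => lineIntegral a (p + ε • e) (q + ε • e) := by
  unfold lineIntegral
  apply intervalIntegral.continuous_parametric_intervalIntegral_of_continuous'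
  unfold Function.uncurry
  fun_prop

/-- The triangle condition holds for `p, q, r` if `w` is closed in a convex set containing all
translates of these vertices by `ε • e`, `ε > 0`. -/
lemma triangle_of_translates {n : ℕ} {a : (Fin n → ℝ) → (Fin n → ℝ)} (ha : Continuous a)
    {U : Set (Fin n → ℝ)} (hU : Convex ℝ U) (hw : IsClosedOneForm a U) (p q r e : Fin n → ℝ)
    (hp : ∀ ε : ℝ, 0 < ε → p + ε • e ∈ U) (hq : ∀ ε : ℝ, 0 < ε → q + ε • e ∈ U)
    (hr : ∀ ε : ℝ, 0 < ε → r + ε • e ∈ U) :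
    lineIntegral a p q + lineIntegral a q r + lineIntegral a r p = 0 := by
  have hc := ((continuous_lineIntegral_translate ha p q e).add
    (continuous_lineIntegral_translate ha q r e)).add (continuous_lineIntegral_translate ha r p e)
  have hlim := (hc.tendsto 0).mono_left (nhdsWithin_le_nhds (s := Set.Ioi 0))
  simp only [Pi.add_apply, zero_smul, add_zero] at hlim
  refine tendsto_nhds_unique hlim (tendsto_const_nhds.congr' ?_)
  filter_upwards [self_mem_nhdsWithin] with ε hε
  refine (hw _ _ _ (convexHull_min ?_ hU)).symm
  rintro x (rfl | rfl | rfl)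
  exacts [hp ε hε, hq ε hε, hr ε hε]

/-- If a continuous 1-form on `ℝⁿ` is closed on the open half-space `A = {xₙ > 0}`
and closed on the open half-space `B = {xₙ < 0}`, then it is closed on all of `ℝⁿ`. -/
theorem isClosedOneForm_of_halfSpaces (n : ℕ)
    (a : (Fin (n + 1) → ℝ) → (Fin (n + 1) → ℝ)) (ha : Continuous a)
    (hA : IsClosedOneForm a {x | 0 < x (Fin.last n)})
    (hB : IsClosedOneForm a {x | x (Fin.last n) < 0}) :
    IsClosedOneForm a Set.univ := by
  have hlin : IsLinearMap ℝ fun x : Fin (n + 1) → ℝ => x (Fin.last n) :=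
    ⟨fun _ _ => rfl, fun _ _ => rfl⟩
  have hpos : ∀ p q : Fin (n + 1) → ℝ, 0 ≤ p (Fin.last n) → 0 ≤ q (Fin.last n) →
      lineIntegral a p q = lineIntegral a 0 q - lineIntegral a 0 p := by
    intro p q hp hq
    have h := triangle_of_translates ha (convex_halfSpace_gt hlin 0) hA 0 p q (fun _ => 1)
      (fun ε hε => by simpa using hε)
      (fun ε hε => by simpa using add_pos_of_nonneg_of_pos hp hε)
      (fun ε hε => by simpa using add_pos_of_nonneg_of_pos hq hε)
    linarith [lineIntegral_symm a 0 q]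
  have hneg : ∀ p q : Fin (n + 1) → ℝ, p (Fin.last n) ≤ 0 → q (Fin.last n) ≤ 0 →
      lineIntegral a p q = lineIntegral a 0 q - lineIntegral a 0 p := by
    intro p q hp hq
    have h := triangle_of_translates ha (convex_halfSpace_lt hlin 0) hB 0 p q (fun _ => -1)
      (fun ε hε => by simpa using hε)
      (fun ε hε => by
        simp only [Set.mem_ofPred_eq, Pi.add_apply, Pi.smul_apply, smul_eq_mul]; linarith)
      (fun ε hε => by
        simp only [Set.mem_ofPred_eq, Pi.add_apply, Pi.smul_apply, smul_eq_mul]; linarith)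
    linarith [lineIntegral_symm a 0 q]
  have hcross : ∀ p q : Fin (n + 1) → ℝ, 0 < p (Fin.last n) → q (Fin.last n) < 0 →
      lineIntegral a p q = lineIntegral a 0 q - lineIntegral a 0 p := by
    intro p q hp hq
    -- The parameter at which the segment from `p` to `q` crosses the hyperplane.
    obtain ⟨s, hs⟩ : ∃ s : ℝ, s = p (Fin.last n) / (p (Fin.last n) - q (Fin.last n)) := ⟨_, rfl⟩
    have hm : ((1 - s) • p + s • q) (Fin.last n) = 0 := by
      have hne : p (Fin.last n) - q (Fin.last n) ≠ 0 := by linarith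
      simp only [Pi.add_apply, Pi.smul_apply, smul_eq_mul, hs]
      field_simp
      ring
    rw [lineIntegral_split ha p q s, hpos _ _ hp.le hm.ge, hneg _ _ hm.le hq.le]
    ring
  have key : ∀ p q : Fin (n + 1) → ℝ,
      lineIntegral a p q = lineIntegral a 0 q - lineIntegral a 0 p := by
    intro p q
    rcases le_or_gt 0 (p (Fin.last n)) with hp | hp <;>
      rcases le_or_gt 0 (q (Fin.last n)) with hq | hq
    · exact hpos p q hp hq
    · rcases hp.eq_or_lt with hp | hp
      · exact hneg p q hp.ge hq.le
      · exact hcross p q hp hq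
    · rcases hq.eq_or_lt with hq | hq
      · exact hneg p q hp.le hq.ge
      · linarith [lineIntegral_symm a q p, hcross q p hq hp]
    · exact hneg p q hp.le hq.le
  intro p q r _
  rw [key p q, key q r, key r p]
  ring
end

section
/- Let X ⊆ ℝⁿ be an open convex set and A ⊆ X an open subset; set Y = (closure of A in X) \ A. Assume that every closed line segment contained in X either lies entirely in Y or meets Y in at most finitely many points (this holds in particular when Y is a real analytic codimension-1 submanifold of X). Let F : X → ℝ be a C¹ function which is convex on a convex neighborhood of each point of A and convex on a convex neighborhood of each point of X \ (closure of A in X). Then F is convex on X. -/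
/-!
Along a segment with an endpoint off `Y`, only finitely many points lie on `Y`, so the restriction
`φ` of `F` to it has a continuous derivative that is locally monotone off a finite set. Such a
function is monotone (`monotoneOn_of_locally_off_finite`): if `h a > h b` with `a < b`, choose an
intermediate value `c` outside the finite image of the exceptional set; at the last point of
`[a, b]` where `h = c`, local monotonicity and the intermediate value theorem yield a later such
point. Hence `φ` is convex (`convexOn_comp_lineMap`). Since `Y` is contained in the boundary of the
open set `A`, its complement is dense in `X`, and the convexity inequality for arbitrary endpoints
follows by continuity of `F`.
-/

open Real

theorem monotoneOn_of_locally_off_finite {h : ℝ → ℝ} {S : Set ℝ} {u v : ℝ}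
    (hS : S.Finite) (hc : ContinuousOn h (Set.Icc u v))
    (hloc : ∀ t ∈ Set.Icc u v, t ∉ S → ∃ s ∈ nhds t, MonotoneOn h s) :
    MonotoneOn h (Set.Icc u v) := by
  intro a ha b hb hab
  by_contra! hlt
  obtain ⟨c, hcI, hcS⟩ := ((Set.Ioo_infinite hlt).sdiff (hS.image h)).nonempty
  have hsub : Set.Icc a b ⊆ Set.Icc u v := Set.Icc_subset_Icc ha.1 hb.2
  have hcab := hc.mono hsub
  have hK : IsCompact (Set.Icc a b ∩ h ⁻¹' {c}) :=
    isCompact_Icc.of_isClosed_subset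
      (hcab.preimage_isClosed_of_isClosed isClosed_Icc isClosed_singleton)
      Set.inter_subset_left
  have hne : (Set.Icc a b ∩ h ⁻¹' {c}).Nonempty := by
    obtain ⟨t, ht, htc⟩ := intermediate_value_Icc' hab hcab ⟨hcI.1.le, hcI.2.le⟩
    exact ⟨t, ht, htc⟩
  obtain ⟨m, ⟨hm, hmc⟩, hmax⟩ := hK.exists_isGreatest hne
  have hmc : h m = c := hmc
  have hmb : m < b := lt_of_le_of_ne hm.2 (by
    rintro rfl
    exact absurd hmc hcI.1.ne)
  obtain ⟨s, hs, hmono⟩ := hloc m (hsub hm) (fun hmS => hcS ⟨m, hmS, hmc⟩)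
  obtain ⟨t, hts, ht⟩ : ∃ t, t ∈ s ∧ t ∈ Set.Ioo m b :=
    ((Filter.eventually_of_mem (mem_nhdsWithin_of_mem_nhds hs) fun _ hx => hx).and
      (Ioo_mem_nhdsGT hmb)).exists
  have hct : c ≤ h t := hmc ▸ hmono (mem_of_mem_nhds hs) hts ht.1.le
  obtain ⟨t', ht', htc'⟩ := intermediate_value_Icc' ht.2.le
    (hcab.mono (Set.Icc_subset_Icc_left (hm.1.trans ht.1.le))) ⟨hcI.1.le, hct⟩
  have := hmax ⟨⟨hm.1.trans (ht.1.le.trans ht'.1), ht'.2⟩, htc'⟩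
  linarith [ht.1, ht'.1]

/-- A `C¹` function that is locally convex at all but finitely many points of a segment is convex
along that segment. -/
theorem convexOn_comp_lineMap {n : ℕ} {X Y : Set (Fin n → ℝ)} (hXopen : IsOpen X)
    {F : (Fin n → ℝ) → ℝ} (hF : ContDiffOn ℝ 1 F X) {p q : Fin n → ℝ}
    (hpq : p ≠ q) (hseg : segment ℝ p q ⊆ X) (hfin : (segment ℝ p q ∩ Y).Finite)
    (hloc : ∀ x ∈ X, x ∉ Y → ∃ s ∈ nhds x, s ⊆ X ∧ ConvexOn ℝ s F) :
    ConvexOn ℝ (Set.Icc 0 1) (F ∘ AffineMap.lineMap (k := ℝ) p q) := by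
  set L : ℝ →ᵃ[ℝ] (Fin n → ℝ) := AffineMap.lineMap p q with hL
  have hLc : Continuous L := AffineMap.lineMap_continuous
  have hLseg : ∀ t ∈ Set.Icc (0 : ℝ) 1, L t ∈ segment ℝ p q := fun t ht => by
    rw [segment_eq_image_lineMap]; exact ⟨t, ht, rfl⟩
  have hderiv : ∀ t, L t ∈ X → HasDerivAt (F ∘ L) (fderiv ℝ F (L t) (q - p)) t := fun t ht =>
    (((hF.differentiableOn one_ne_zero).differentiableAt
      (hXopen.mem_nhds ht)).hasFDerivAt).comp_hasDerivAt t AffineMap.hasDerivAt_lineMap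
  have hdc : ContinuousOn (deriv (F ∘ L)) (Set.Icc 0 1) := by
    have h1 : ContinuousOn (fun t => fderiv ℝ F (L t) (q - p)) (Set.Icc 0 1) :=
      ((hF.continuousOn_fderiv_of_isOpen hXopen le_rfl).comp hLc.continuousOn
        (fun t ht => hseg (hLseg t ht))).clm_apply continuousOn_const
    exact h1.congr fun t ht => (hderiv t (hseg (hLseg t ht))).deriv
  have hmono : MonotoneOn (deriv (F ∘ L)) (Set.Icc 0 1) := by
    refine monotoneOn_of_locally_off_finite (S := L ⁻¹' (segment ℝ p q ∩ Y))
      (hfin.preimage (AffineMap.lineMap_injective ℝ hpq).injOn) hdc fun t ht htS => ?_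
    obtain ⟨s, hs, hsX, hconv⟩ := hloc (L t) (hseg (hLseg t ht))
      fun hy => htS ⟨hLseg t ht, hy⟩
    exact ⟨L ⁻¹' s, hLc.continuousAt hs, (hconv.comp_affineMap L).monotoneOn_deriv
      fun t ht => (hderiv t (hsX ht)).differentiableAt⟩
  exact MonotoneOn.convexOn_of_deriv (convex_Icc 0 1)
    (fun t ht => (hderiv t (hseg (hLseg t ht))).continuousAt.continuousWithinAt)
    (fun t ht => (hderiv t (hseg (hLseg t (interior_subset ht)))).differentiableAt
      |>.differentiableWithinAt)
    (hmono.mono interior_subset)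

/-- Suppose `X ⊆ ℝⁿ` is open and convex, `A ⊆ X` is open, and
`Y = (closure of A in X) \ A` is "thin": every closed segment contained in `X`
either lies in `Y` or meets `Y` in a finite set (as holds when `Y` is a real
analytic codimension-1 submanifold).  If `F` is `C¹` on `X`, convex on a convex
neighborhood of each point of `A`, and convex on a convex neighborhood of each
point of `X \ (closure of A in X)`, then `F` is convex on `X`. -/
theorem convexOn_of_locally_convexOn {n : ℕ}
    (X A : Set (Fin n → ℝ)) (hXopen : IsOpen X) (hXconv : Convex ℝ X)
    (hAopen : IsOpen A) (hAX : A ⊆ X)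
    (Y : Set (Fin n → ℝ)) (hY : Y = (closure A ∩ X) \ A)
    (hthin : ∀ p q : Fin n → ℝ, segment ℝ p q ⊆ X →
      segment ℝ p q ⊆ Y ∨ (segment ℝ p q ∩ Y).Finite)
    (F : (Fin n → ℝ) → ℝ) (hF : ContDiffOn ℝ 1 F X)
    (hconvA : ∀ x ∈ A, ∃ s ∈ nhds x, s ⊆ X ∧ Convex ℝ s ∧ ConvexOn ℝ s F)
    (hconvB : ∀ x ∈ X \ (closure A ∩ X),
      ∃ s ∈ nhds x, s ⊆ X ∧ Convex ℝ s ∧ ConvexOn ℝ s F) :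
    ConvexOn ℝ X F := by
  have hloc : ∀ x ∈ X, x ∉ Y → ∃ s ∈ nhds x, s ⊆ X ∧ ConvexOn ℝ s F := by
    intro x hx hxY
    by_cases hxA : x ∈ A
    · obtain ⟨s, hs, hsX, -, hc⟩ := hconvA x hxA
      exact ⟨s, hs, hsX, hc⟩
    · obtain ⟨s, hs, hsX, -, hc⟩ := hconvB x ⟨hx, fun h => hxY (hY ▸ ⟨h, hxA⟩)⟩
      exact ⟨s, hs, hsX, hc⟩
  -- An open subset of `closure A` meets `A`, so `Y` has empty interior.
  have hdense : ∀ p ∈ X, p ∈ closure (X \ Y) := by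
    intro p hp
    rw [_root_.mem_closure_iff]
    intro o ho hpo
    by_contra hemp
    have hsub : o ∩ X ⊆ Y := fun z hz => by
      by_contra hzY
      exact hemp ⟨z, hz.1, hz.2, hzY⟩
    subst hY
    obtain ⟨z, hz, hzA⟩ := _root_.mem_closure_iff.1 (hsub ⟨hpo, hp⟩).1.1 _ (ho.inter hXopen) ⟨hpo, hp⟩
    exact (hsub hz).2 hzA
  refine ⟨hXconv, fun p hp q hq a b ha hb hab => ?_⟩
  have hcont : ∀ z ∈ X, ContinuousAt F z := fun z hz =>
    hF.continuousOn.continuousAt (hXopen.mem_nhds hz)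
  have hmid : a • p + b • q ∈ X := hXconv hp hq ha hb hab
  -- By continuity in the endpoint `p`, it suffices to treat `p ∉ Y`.
  refine ContinuousWithinAt.closure_le (s := X \ Y) (f := fun p => F (a • p + b • q))
    (g := fun p => a • F p + b • F q) (hdense p hp) ?_ ?_ ?_
  · exact (ContinuousAt.comp (f := fun p => a • p + b • q) (g := F) (hcont _ hmid)
      (by fun_prop)).continuousWithinAt
  · exact (((hcont p hp).const_smul a).add continuousAt_const).continuousWithinAt
  rintro p' ⟨hp', hp'Y⟩
  have hseg := hXconv.segment_subset hp' hq
  rcases eq_or_ne p' q with rfl | hne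
  · simp only [← add_smul, hab, one_smul, le_refl]
  have hfin := (hthin p' q hseg).resolve_left fun h => hp'Y (h (left_mem_segment ℝ p' q))
  have := (convexOn_comp_lineMap hXopen hF hne hseg hfin hloc).2
    (Set.left_mem_Icc.2 zero_le_one) (Set.right_mem_Icc.2 zero_le_one) ha hb hab
  obtain rfl : a = 1 - b := by linarith
  simpa [AffineMap.lineMap_apply_module] using this
end

section
/- Let X ⊆ ℝⁿ be an open convex set and A ⊆ X an open subset; set Y = (closure of A in X) \ A, and assume that every closed line segment contained in X either lies entirely in Y or meets Y in at most finitely many points (this holds in particular when Y is a real analytic codimension-1 submanifold of X). Let F̃ : X → ℝ be a C¹ function such that F̃ is convex on a convex neighborhood of each point of A, and such that each partial derivative ∂F̃/∂xᵢ is constant on each connected component of X \ A. Then F̃ is convex on X. -/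
/-!
A `C¹` function is convex on `X` as soon as its directional derivative
`t ↦ F'(p + t(q - p))(q - p)` is monotone on `[0, 1]` for every segment `[p, q]` in `X`. If
`[p, q] ⊆ Y`, the segment is a connected subset of `X \ A` and this derivative is constant.
Otherwise only finitely many parameters are mapped into `Y`; at every other parameter the point lies
in `A`, where `F` is locally convex, or outside `closure A`, where `F'` is locally constant, so the
derivative is locally nondecreasing there. A continuous function on an interval that is locally
nondecreasing off a finite set is nondecreasing (`le_of_eventually_le_off_finite`).
-/

open Set Filter Topology

lemma le_of_frequently_le_right {h : ℝ → ℝ} {a b : ℝ} (hab : a ≤ b)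
    (hc : ContinuousOn h (Icc a b))
    (hr : ∀ t ∈ Ico a b, ∃ᶠ u in 𝓝[>] t, h t ≤ h u) : h a ≤ h b := by
  have hcl : IsClosed ({t | h a ≤ h t} ∩ Icc a b) := by
    rw [inter_comm]
    exact hc.preimage_isClosed_of_isClosed isClosed_Icc isClosed_Ici
  refine hcl.Icc_subset_of_forall_exists_gt (le_refl (h a)) ?_ (right_mem_Icc.2 hab)
  rintro t ⟨hat, ht⟩ y hy
  obtain ⟨u, htu, hu⟩ := ((hr t ht).and_eventually (Ioc_mem_nhdsGT hy)).exists
  exact ⟨u, le_trans hat htu, hu⟩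

/-- The exceptional points of `S` are harmless: just to the right of any `t` there are none, so the
inequality `h c ≤ h u` holds for `t < c < u` close to `t`, and letting `c` decrease to `t` gives
`h t ≤ h u`, whether or not `t ∈ S`. -/
lemma le_of_eventually_le_off_finite {h : ℝ → ℝ} {a b : ℝ} {S : Set ℝ} (hab : a ≤ b)
    (hc : ContinuousOn h (Icc a b)) (hS : S.Finite)
    (hr : ∀ t ∈ Ico a b, t ∉ S → ∀ᶠ u in 𝓝[>] t, h t ≤ h u) : h a ≤ h b := by
  refine le_of_frequently_le_right hab hc fun t ht => Eventually.frequently ?_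
  have h1 : (S \ {t})ᶜ ∈ 𝓝 t :=
    (hS.subset sdiff_subset).isClosed.isOpen_compl.mem_nhds (by simp)
  obtain ⟨d, hd, hdS⟩ := (mem_nhdsGT_iff_exists_Ioo_subset' ht.2).1 (mem_nhdsWithin_of_mem_nhds h1)
  filter_upwards [Ioo_mem_nhdsGT hd, Ioo_mem_nhdsGT ht.2] with u hu hub
  have key : ∀ c ∈ Ioo t u, h c ≤ h u := fun c hcu =>
    le_of_frequently_le_right hcu.2.le
      (hc.mono (Icc_subset_Icc (ht.1.trans hcu.1.le) hub.2.le)) fun v hv => by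
        have hv' : t < v := hcu.1.trans_le hv.1
        refine (hr v ⟨ht.1.trans hv'.le, hv.2.trans hub.2⟩ fun hvS => ?_).frequently
        exact hdS ⟨hv', hv.2.trans hu.2⟩ ⟨hvS, hv'.ne'⟩
  have hlim : Tendsto h (𝓝[>] t) (𝓝 (h t)) := by
    refine (hc t (Ico_subset_Icc_self ht)).mono_left (nhdsWithin_le_of_mem ?_)
    filter_upwards [Ioo_mem_nhdsGT ht.2] with v hv using ⟨ht.1.trans hv.1.le, hv.2.le⟩
  exact le_of_tendsto hlim (by filter_upwards [Ioo_mem_nhdsGT hu.1] using key)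


open Real

/-- Suppose `X ⊆ ℝⁿ` is open and convex, `A ⊆ X` is open, and
`Y = (closure of A in X) \ A` is "thin": every closed segment contained in `X`
either lies in `Y` or meets `Y` in a finite set (as holds when `Y` is a real
analytic codimension-1 submanifold).  If `F̃` is `C¹` on `X`, convex on a convex
neighborhood of each point of `A`, and its derivative (hence each partial
derivative `∂F̃/∂xᵢ`) is constant on each connected component of `X \ A`,
then `F̃` is convex on `X`. -/
theorem convexOn_of_locally_convexOn_of_constant_deriv {n : ℕ}
    (X A : Set (Fin n → ℝ)) (hXopen : IsOpen X) (hXconv : Convex ℝ X)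
    (hAopen : IsOpen A) (hAX : A ⊆ X)
    (Y : Set (Fin n → ℝ)) (hY : Y = (closure A ∩ X) \ A)
    (hthin : ∀ p q : Fin n → ℝ, segment ℝ p q ⊆ X →
      segment ℝ p q ⊆ Y ∨ (segment ℝ p q ∩ Y).Finite)
    (F : (Fin n → ℝ) → ℝ) (hF : ContDiffOn ℝ 1 F X)
    (hconvA : ∀ x ∈ A, ∃ s ∈ nhds x, s ⊆ X ∧ Convex ℝ s ∧ ConvexOn ℝ s F)
    (hconst : ∀ x ∈ X \ A, ∀ y ∈ connectedComponentIn (X \ A) x,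
      fderiv ℝ F y = fderiv ℝ F x) :
    ConvexOn ℝ X F := by
  subst hY
  have hdiff : ∀ x ∈ X, HasFDerivAt F (fderiv ℝ F x) x := fun x hx =>
    ((hF.differentiableOn one_ne_zero).differentiableAt (hXopen.mem_nhds hx)).hasFDerivAt
  have hcont := hF.continuousOn_fderiv_of_isOpen hXopen le_rfl
  have hpre : ∀ C ⊆ X \ A, IsPreconnected C → ∀ x ∈ C, ∀ y ∈ C, fderiv ℝ F y = fderiv ℝ F x :=
    fun C hC hCp x hx y hy => hconst x (hC hx) y (hCp.subset_connectedComponentIn hx hC hy)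
  refine ⟨hXconv, fun p hp q hq => ?_⟩
  set ℓ : ℝ →ᵃ[ℝ] (Fin n → ℝ) := AffineMap.lineMap p q with hℓ
  have hℓc : Continuous ℓ := AffineMap.lineMap_continuous
  have hseg : segment ℝ p q ⊆ X := hXconv.segment_subset hp hq
  have hmem : ∀ t ∈ Icc (0 : ℝ) 1, ℓ t ∈ segment ℝ p q := fun t ht => by
    rw [segment_eq_image_lineMap]; exact mem_image_of_mem _ ht
  set h : ℝ → ℝ := fun t => fderiv ℝ F (ℓ t) (q - p) with hh
  have hg : ∀ t, ℓ t ∈ X → HasDerivAt (F ∘ ℓ) (h t) t := fun t ht =>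
    (hdiff _ ht).comp_hasDerivAt t AffineMap.hasDerivAt_lineMap
  have hhc : ContinuousOn h (Icc 0 1) :=
    (hcont.comp hℓc.continuousOn fun t ht => hseg (hmem t ht)).clm_apply continuousOn_const
  have hmono : MonotoneOn h (Icc 0 1) := by
    intro u hu v hv huv
    rcases hthin p q hseg with hY | hfin
    · have := hpre (segment ℝ p q) (fun x hx => ⟨(hY hx).1.2, (hY hx).2⟩)
        (convex_segment p q).isPreconnected _ (hmem u hu) _ (hmem v hv)
      exact (congrArg (fun f => f (q - p)) this).ge
    by_cases hpq : p = q
    · simp [hh, hpq]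
    refine le_of_eventually_le_off_finite huv (hhc.mono (Icc_subset_Icc hu.1 hv.2))
      (hfin.preimage (AffineMap.lineMap_injective ℝ hpq).injOn) fun t ht htS => ?_
    have ht01 : t ∈ Icc (0 : ℝ) 1 := ⟨hu.1.trans ht.1, ht.2.le.trans hv.2⟩
    have htX := hseg (hmem t ht01)
    by_cases htA : ℓ t ∈ A
    · obtain ⟨s, hs, hsX, -, hFs⟩ := hconvA _ htA
      have hgs : ConvexOn ℝ (ℓ ⁻¹' s) (F ∘ ℓ) := hFs.comp_affineMap ℓ
      filter_upwards [mem_nhdsWithin_of_mem_nhds (hℓc.continuousAt hs), self_mem_nhdsWithin]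
        with w hw htw
      have hts : ℓ t ∈ s := mem_of_mem_nhds hs
      -- By convexity, the secant slope between `t` and `w` separates the two derivatives.
      exact (hgs.le_slope_of_hasDerivAt hts hw htw (hg t htX)).trans
        (hgs.slope_le_of_hasDerivAt hts hw htw (hg w (hsX hw)))
    · have htcl : ℓ t ∉ closure A := fun hcl => htS ⟨hmem t ht01, ⟨hcl, htX⟩, htA⟩
      obtain ⟨ε, hε, hball⟩ := Metric.isOpen_iff.1
        (hXopen.inter isClosed_closure.isOpen_compl) (ℓ t) ⟨htX, htcl⟩
      filter_upwards [mem_nhdsWithin_of_mem_nhds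
        (hℓc.continuousAt (Metric.ball_mem_nhds (ℓ t) hε))] with w hw
      have := hpre (Metric.ball (ℓ t) ε)
        (fun x hx => ⟨(hball hx).1, fun hxA => (hball hx).2 (subset_closure hxA)⟩)
        (convex_ball _ _).isPreconnected _ (Metric.mem_ball_self hε) _ hw
      exact (congrArg (fun f => f (q - p)) this).ge
  have hgconv : ConvexOn ℝ (Icc 0 1) (F ∘ ℓ) := by
    have hgd : ∀ t ∈ Icc (0 : ℝ) 1, HasDerivAt (F ∘ ℓ) (h t) t := fun t ht =>
      hg t (hseg (hmem t ht))
    refine MonotoneOn.convexOn_of_deriv (convex_Icc 0 1)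
      (fun t ht => (hgd t ht).continuousAt.continuousWithinAt)
      (fun t ht => (hgd t (interior_subset ht)).differentiableAt.differentiableWithinAt) ?_
    refine (hmono.mono interior_subset).congr fun t ht => ?_
    exact (hgd t (interior_subset ht)).deriv.symm
  intro a b ha hb hab
  have key := hgconv.2 (left_mem_Icc.2 zero_le_one) (right_mem_Icc.2 zero_le_one) ha hb hab
  have hlb : ℓ b = a • p + b • q := by
    rw [hℓ, AffineMap.lineMap_apply_module, ← hab, add_sub_cancel_right]
  have h0 : ℓ 0 = p := AffineMap.lineMap_apply_zero p q
  have h1 : ℓ 1 = q := AffineMap.lineMap_apply_one p q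
  simpa [h0, h1, hlb] using key
end

section
/- Fix I₁₂, I₂₃, I₃₁ ∈ [0,∞). Let U = {r ∈ ℝ³_{>0} : the lengths l₁(r), l₂(r), l₃(r) satisfy the three strict triangle inequalities}, and for r ∈ U let θᵢ(r) be the inner angle of the Euclidean triangle with side lengths l₁(r), l₂(r), l₃(r) opposite the side of length lᵢ(r). Let Θᵢ(u) = θᵢ(e^{u₁}, e^{u₂}, e^{u₃}) on the open set {u ∈ ℝ³ : (e^{u₁}, e^{u₂}, e^{u₃}) ∈ U}. Then the functions Θᵢ are smooth there and ∂Θᵢ/∂uⱼ = ∂Θⱼ/∂uᵢ for all i, j ∈ {1,2,3}; that is, the 1-form w = Σᵢ Θᵢ du_i is closed. -/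
/-!
Write `Lₖ = lₖ²` and `D = 16 · Area² = 4 Lⱼ Lₖ - (Lⱼ + Lₖ - Lᵢ)²`, which is symmetric in the three
squared lengths and positive on the domain by Heron's factorization. Differentiating the law of
cosines gives, along any direction,
`dθᵢ = -D^(-1/2) (dLⱼ + dLₖ - dLᵢ - (Lⱼ + Lₖ - Lᵢ) (dLⱼ / (2 Lⱼ) + dLₖ / (2 Lₖ)))`
(`hasDerivAt_angle`). For the direction `∂/∂uⱼ`, the length `lⱼ` is constant, and
after clearing denominators the symmetry of `∂θᵢ/∂uⱼ` in `i, j` is a polynomial identity in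
`exp uᵢ` and the inversive distances. Smoothness holds because the lengths are positive and the
strict triangle inequalities keep the cosines away from `±1`, where `arccos` is not smooth.
-/

open Real

/-- Euclidean inversive distance edge length: `I k` is the inversive distance on
the edge opposite vertex `k`, and `eucLen I r k = √(rᵢ² + rⱼ² + 2 rᵢ rⱼ Iᵢⱼ)`
where `{i, j} = {k+1, k+2}`. -/
noncomputable def eucLen (I r : Fin 3 → ℝ) (k : Fin 3) : ℝ :=
  Real.sqrt (r (k + 1) ^ 2 + r (k + 2) ^ 2 + 2 * r (k + 1) * r (k + 2) * I k)

/-- The inner angle at vertex `i` (opposite the side of length `eucLen I r i`)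
of the Euclidean triangle with side lengths `eucLen I r`. -/
noncomputable def eucInvAngle (I r : Fin 3 → ℝ) (i : Fin 3) : ℝ :=
  Real.arccos ((eucLen I r (i + 1) ^ 2 + eucLen I r (i + 2) ^ 2 -
      eucLen I r i ^ 2) / (2 * eucLen I r (i + 1) * eucLen I r (i + 2)))

/-- The domain, in the logarithmic coordinates `uᵢ = ln rᵢ`, where the three
Euclidean inversive distance lengths satisfy the strict triangle inequalities. -/
def eucDomainU (I : Fin 3 → ℝ) : Set (Fin 3 → ℝ) :=
  {u | ∀ i : Fin 3, eucLen I (fun j => Real.exp (u j)) i <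
    eucLen I (fun j => Real.exp (u j)) (i + 1) +
    eucLen I (fun j => Real.exp (u j)) (i + 2)}

/-- The angles `Θᵢ` as functions of the logarithmic coordinates `uᵢ = ln rᵢ`. -/
noncomputable def eucΘ (I : Fin 3 → ℝ) (i : Fin 3) (u : Fin 3 → ℝ) : ℝ :=
  eucInvAngle I (fun j => Real.exp (u j)) i

/-- The squared edge length `lₖ²` as a polynomial in the radii. -/
noncomputable def eucLenSq (I r : Fin 3 → ℝ) (k : Fin 3) : ℝ :=
  r (k + 1) ^ 2 + r (k + 2) ^ 2 + 2 * r (k + 1) * r (k + 2) * I k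

/-- The directional derivative of `eucLenSq` in the logarithmic coordinates `uᵢ = ln rᵢ`,
at the point with radii `r` and in the direction `v`. -/
noncomputable def eucLenSqDeriv (I r v : Fin 3 → ℝ) (k : Fin 3) : ℝ :=
  2 * r (k + 1) ^ 2 * v (k + 1) + 2 * r (k + 2) ^ 2 * v (k + 2) +
    2 * r (k + 1) * r (k + 2) * (v (k + 1) + v (k + 2)) * I k

/-- Sixteen times the squared area of a triangle, in terms of its squared side lengths. -/
noncomputable def heronSq (A B C : ℝ) : ℝ :=
  2 * (A * B + B * C + C * A) - A ^ 2 - B ^ 2 - C ^ 2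

lemma heronSq_rotate (A B C : ℝ) : heronSq A B C = heronSq B C A := by
  unfold heronSq; ring

lemma heronSq_pos {x y z : ℝ} (hx : 0 < x) (hy : 0 < y) (hz : 0 < z)
    (h1 : x < y + z) (h2 : y < z + x) (h3 : z < x + y) :
    0 < heronSq (x ^ 2) (y ^ 2) (z ^ 2) := by
  have h : heronSq (x ^ 2) (y ^ 2) (z ^ 2) =
      (x + y + z) * (y + z - x) * (z + x - y) * (x + y - z) := by
    unfold heronSq; ring
  rw [h]
  have := sub_pos.2 h1
  have := sub_pos.2 h2
  have := sub_pos.2 h3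
  positivity

lemma one_sub_cos_sq {A B C : ℝ} (hA : 0 < A) (hB : 0 < B) (hC : 0 < C) :
    1 - ((√B ^ 2 + √C ^ 2 - √A ^ 2) / (2 * √B * √C)) ^ 2 = heronSq A B C / (2 * √B * √C) ^ 2 := by
  have hb := Real.sqrt_pos.2 hB
  have hc := Real.sqrt_pos.2 hC
  have eA := Real.sq_sqrt hA.le
  have eB := Real.sq_sqrt hB.le
  have eC := Real.sq_sqrt hC.le
  rw [eq_div_iff (by positivity), sub_mul, div_pow, div_mul_cancel₀ _ (by positivity), mul_pow,
    mul_pow, eA, eB, eC]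
  unfold heronSq; ring

lemma cos_ne {A B C : ℝ} (hA : 0 < A) (hB : 0 < B) (hC : 0 < C) (hD : 0 < heronSq A B C) :
    (√B ^ 2 + √C ^ 2 - √A ^ 2) / (2 * √B * √C) ≠ -1 ∧
    (√B ^ 2 + √C ^ 2 - √A ^ 2) / (2 * √B * √C) ≠ 1 := by
  have h := one_sub_cos_sq hA hB hC
  have hb := Real.sqrt_pos.2 hB
  have hc := Real.sqrt_pos.2 hC
  have hp : 0 < heronSq A B C / (2 * √B * √C) ^ 2 := by positivity
  constructor <;> intro e <;> rw [e] at h <;> norm_num at h <;> linarith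

/-- The derivative of an angle of a Euclidean triangle whose squared side lengths vary
differentiably. -/
lemma hasDerivAt_angle {A B C : ℝ → ℝ} {A' B' C' t : ℝ} (hA : HasDerivAt A A' t)
    (hB : HasDerivAt B B' t) (hC : HasDerivAt C C' t) (pA : 0 < A t) (pB : 0 < B t)
    (pC : 0 < C t) (hD : 0 < heronSq (A t) (B t) (C t)) :
    HasDerivAt (fun s => Real.arccos ((√(B s) ^ 2 + √(C s) ^ 2 - √(A s) ^ 2) /
        (2 * √(B s) * √(C s))))
      (-(1 / √(heronSq (A t) (B t) (C t))) * (B' + C' - A' -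
        (B t + C t - A t) * (B' / (2 * B t) + C' / (2 * C t)))) t := by
  have hb := Real.sqrt_pos.2 pB
  have hc := Real.sqrt_pos.2 pC
  have ha := Real.sqrt_pos.2 pA
  have hd := Real.sqrt_pos.2 hD
  obtain ⟨n1, n2⟩ := cos_ne pA pB pC hD
  have sA := hA.sqrt pA.ne'
  have sB := hB.sqrt pB.ne'
  have sC := hC.sqrt pC.ne'
  have hq := (((sB.pow 2).add (sC.pow 2)).sub (sA.pow 2)).div ((sB.const_mul 2).mul sC)
    (by simp only [Pi.mul_apply]; positivity)
  have key := (Real.hasDerivAt_arccos n1 n2).comp t hq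
  refine key.congr_deriv ?_
  rw [one_sub_cos_sq pA pB pC, Real.sqrt_div hD.le, Real.sqrt_sq (by positivity)]
  have eA := Real.sq_sqrt pA.le
  have eB := Real.sq_sqrt pB.le
  have eC := Real.sq_sqrt pC.le
  simp only [Pi.mul_apply, Pi.add_apply, Pi.sub_apply, Pi.pow_apply]
  generalize heronSq (A t) (B t) (C t) = D at *
  -- expressing the squared lengths through the lengths makes the goal a rational identity
  generalize √(A t) = a at *
  generalize √(B t) = b at *
  generalize √(C t) = c at *
  rw [← eA, ← eB, ← eC]
  field_simp
  push_cast
  ring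

lemma eucLenSq_pos {I r : Fin 3 → ℝ} (hI : ∀ k, 0 ≤ I k) (hr : ∀ k, 0 < r k) (k : Fin 3) :
    0 < eucLenSq I r k := by
  have := hI k
  have := hr (k + 1)
  have := hr (k + 2)
  unfold eucLenSq; positivity

lemma heronSq_eucLenSq_pos {I u : Fin 3 → ℝ} (hI : ∀ k, 0 ≤ I k) (hu : u ∈ eucDomainU I) :
    0 < heronSq (eucLenSq I (fun j => Real.exp (u j)) 0) (eucLenSq I (fun j => Real.exp (u j)) 1)
      (eucLenSq I (fun j => Real.exp (u j)) 2) := by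
  have p := eucLenSq_pos (r := fun j => Real.exp (u j)) hI (fun k => Real.exp_pos _)
  have e : ∀ k, eucLen I (fun j => Real.exp (u j)) k ^ 2 =
      eucLenSq I (fun j => Real.exp (u j)) k := fun k => Real.sq_sqrt (p k).le
  have q : ∀ k, 0 < eucLen I (fun j => Real.exp (u j)) k := fun k => Real.sqrt_pos.2 (p k)
  rw [← e, ← e, ← e]
  exact heronSq_pos (q 0) (q 1) (q 2) (hu 0) (hu 1) (hu 2)

lemma heronSq_eucLenSq_rotate (I r : Fin 3 → ℝ) (i : Fin 3) :
    heronSq (eucLenSq I r i) (eucLenSq I r (i + 1)) (eucLenSq I r (i + 2)) =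
      heronSq (eucLenSq I r 0) (eucLenSq I r 1) (eucLenSq I r 2) := by
  fin_cases i
  · rfl
  · exact (heronSq_rotate _ _ _).symm
  · exact heronSq_rotate _ _ _

lemma contDiffAt_eucΘ {I u : Fin 3 → ℝ} (hI : ∀ k, 0 ≤ I k) (hu : u ∈ eucDomainU I) (i : Fin 3) :
    ContDiffAt ℝ (⊤ : ℕ∞) (eucΘ I i) u := by
  have p := eucLenSq_pos (r := fun j => Real.exp (u j)) hI (fun k => Real.exp_pos _)
  have hD := heronSq_eucLenSq_pos hI hu
  rw [← heronSq_eucLenSq_rotate _ _ i] at hD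
  have hl : ∀ k, ContDiffAt ℝ (⊤ : ℕ∞)
      (fun u : Fin 3 → ℝ => eucLen I (fun j => Real.exp (u j)) k) u := by
    intro k
    refine ContDiffAt.sqrt ?_ (p k).ne'
    fun_prop
  obtain ⟨n1, n2⟩ := cos_ne (p i) (p (i + 1)) (p (i + 2)) hD
  have q : ∀ k, 0 < eucLen I (fun j => Real.exp (u j)) k := fun k => Real.sqrt_pos.2 (p k)
  refine (Real.contDiffAt_arccos n1 n2).comp u
    (((((hl _).pow 2).add ((hl _).pow 2)).sub ((hl _).pow 2)).div
      ((contDiffAt_const.mul (hl _)).mul (hl _)) ?_)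
  have := q (i + 1)
  have := q (i + 2)
  positivity

lemma hasDerivAt_eucLenSq (I u v : Fin 3 → ℝ) (k : Fin 3) :
    HasDerivAt (fun t : ℝ => eucLenSq I (fun j => Real.exp (u j + t * v j)) k)
      (eucLenSqDeriv I (fun j => Real.exp (u j)) v k) 0 := by
  have h : ∀ m, HasDerivAt (fun t : ℝ => Real.exp (u m + t * v m)) (Real.exp (u m) * v m) 0 := by
    intro m
    simpa using (((hasDerivAt_id (0 : ℝ)).mul_const (v m)).const_add (u m)).exp
  have := (((h (k + 1)).pow 2).add ((h (k + 2)).pow 2)).add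
    ((((h (k + 1)).const_mul 2).mul (h (k + 2))).mul_const (I k))
  refine this.congr_deriv ?_
  simp [eucLenSqDeriv]
  ring

/-- The differential of `Θᵢ`, with the factor `-(1 / √D)` written in a form that does not depend
on `i`. The radii are a free variable `r`, so that `r` stays opaque in later algebra. -/
lemma fderiv_eucΘ {I u : Fin 3 → ℝ} (hI : ∀ k, 0 ≤ I k) (hu : u ∈ eucDomainU I) (i : Fin 3)
    (v : Fin 3 → ℝ) (r : Fin 3 → ℝ) (hr : r = fun j => Real.exp (u j)) :
    fderiv ℝ (eucΘ I i) u v =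
      -(1 / √(heronSq (eucLenSq I r 0) (eucLenSq I r 1) (eucLenSq I r 2))) *
      (eucLenSqDeriv I r v (i + 1) + eucLenSqDeriv I r v (i + 2) - eucLenSqDeriv I r v i -
        (eucLenSq I r (i + 1) + eucLenSq I r (i + 2) - eucLenSq I r i) *
        (eucLenSqDeriv I r v (i + 1) / (2 * eucLenSq I r (i + 1)) +
          eucLenSqDeriv I r v (i + 2) / (2 * eucLenSq I r (i + 2)))) := by
  subst hr
  have p := eucLenSq_pos (r := fun j => Real.exp (u j)) hI (fun k => Real.exp_pos _)
  have hD := heronSq_eucLenSq_pos hI hu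
  have hF := ((contDiffAt_eucΘ hI hu i).differentiableAt (by simp)).hasFDerivAt.hasLineDerivAt v
  rw [← heronSq_eucLenSq_rotate _ _ i] at hD ⊢
  have hA := hasDerivAt_angle (hasDerivAt_eucLenSq I u v i) (hasDerivAt_eucLenSq I u v (i + 1))
    (hasDerivAt_eucLenSq I u v (i + 2)) (by simpa using p i) (by simpa using p (i + 1))
    (by simpa using p (i + 2)) (by simpa using hD)
  simp only [zero_mul, add_zero] at hA
  exact HasDerivAt.unique hF hA

/-- Guo's closedness (Euclidean case): for nonnegative inversive distances, the
angle functions `Θᵢ` are smooth on the domain and `∂Θᵢ/∂uⱼ = ∂Θⱼ/∂uᵢ`, i.e. the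
1-form `w = Σᵢ Θᵢ duᵢ` is closed. -/
theorem euc_inversive_oneForm_closed (I : Fin 3 → ℝ) (hI : ∀ k, 0 ≤ I k) :
    (∀ i, ContDiffOn ℝ (⊤ : ℕ∞) (eucΘ I i) (eucDomainU I)) ∧
    ∀ u ∈ eucDomainU I, ∀ i j : Fin 3,
      fderiv ℝ (eucΘ I i) u (Pi.single j 1) =
      fderiv ℝ (eucΘ I j) u (Pi.single i 1) := by
  refine ⟨fun i u hu => (contDiffAt_eucΘ hI hu i).contDiffWithinAt, fun u hu i j => ?_⟩
  obtain ⟨r, hr⟩ : ∃ r : Fin 3 → ℝ, r = fun j => Real.exp (u j) := ⟨_, rfl⟩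
  have p := eucLenSq_pos (r := r) hI (fun k => by rw [hr]; exact Real.exp_pos _)
  rw [fderiv_eucΘ hI hu i _ r hr, fderiv_eucΘ hI hu j _ r hr]
  -- the symmetric factor `-(1 / √D)` is common to both sides
  congr 1
  have p0 := p 0
  have p1 := p 1
  have p2 := p 2
  have e0 : eucLenSq I r 0 = r 1 ^ 2 + r 2 ^ 2 + 2 * r 1 * r 2 * I 0 := rfl
  have e1 : eucLenSq I r 1 = r 2 ^ 2 + r 0 ^ 2 + 2 * r 2 * r 0 * I 1 := rfl
  have e2 : eucLenSq I r 2 = r 0 ^ 2 + r 1 ^ 2 + 2 * r 0 * r 1 * I 2 := rfl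
  have d0 : ∀ v, eucLenSqDeriv I r v 0 =
    2 * r 1 ^ 2 * v 1 + 2 * r 2 ^ 2 * v 2 + 2 * r 1 * r 2 * (v 1 + v 2) * I 0 := fun _ => rfl
  have d1 : ∀ v, eucLenSqDeriv I r v 1 =
    2 * r 2 ^ 2 * v 2 + 2 * r 0 ^ 2 * v 0 + 2 * r 2 * r 0 * (v 2 + v 0) * I 1 := fun _ => rfl
  have d2 : ∀ v, eucLenSqDeriv I r v 2 =
    2 * r 0 ^ 2 * v 0 + 2 * r 1 ^ 2 * v 1 + 2 * r 0 * r 1 * (v 0 + v 1) * I 2 := fun _ => rfl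
  have a1 : (1 : Fin 3) + 1 = 2 := rfl
  have a2 : (1 : Fin 3) + 2 = 0 := rfl
  have a3 : (2 : Fin 3) + 1 = 0 := rfl
  have a4 : (2 : Fin 3) + 2 = 1 := rfl
  generalize eucLenSq I r = L at *
  fin_cases i <;> fin_cases j <;> first
    | rfl
    | (simp [a1, a2, a3, a4, d0, d1, d2]
       field_simp
       rw [e0, e1, e2]
       ring)
end

section
/- Fix I₁₂ ∈ [0,1] and I₂₃, I₁₃ ∈ [0,∞). Then for every r = (r₁,r₂,r₃) ∈ ℝ³_{>0}, the Euclidean inversive distance lengths satisfy l₃(r) < l₁(r) + l₂(r), where l₃ = √(r₁² + r₂² + 2 I₁₂ r₁ r₂), l₁ = √(r₂² + r₃² + 2 I₂₃ r₂ r₃), l₂ = √(r₁² + r₃² + 2 I₁₃ r₁ r₃). In particular, when I₁₂ ≤ 1 the degenerate set {r : l₃ ≥ l₁ + l₂} is empty. -/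
open Real

/-!
For `I₁₂ ≤ 1` the edge `l₃` is at most `r₁ + r₂` (equality being tangency of the first two circles),
while nonnegativity of `I₂₃`, `I₁₃` and `r₃ > 0` force `r₂ < l₁` and `r₁ < l₂`. Hence
`l₃ ≤ r₁ + r₂ < l₁ + l₂`.
-/

/-- If `I₁₂ ∈ [0,1]` and `I₂₃, I₁₃ ≥ 0`, then for all positive radii the
Euclidean inversive distance lengths satisfy `l₃ < l₁ + l₂`; in particular the
degenerate set `{r ∈ ℝ³_{>0} : l₃ ≥ l₁ + l₂}` is empty. -/
theorem euc_no_degeneration_of_inversive_le_one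
    (I12 I23 I13 : ℝ) (hI12 : 0 ≤ I12 ∧ I12 ≤ 1) (hI23 : 0 ≤ I23) (hI13 : 0 ≤ I13) :
    (∀ r1 r2 r3 : ℝ, 0 < r1 → 0 < r2 → 0 < r3 →
      Real.sqrt (r1 ^ 2 + r2 ^ 2 + 2 * I12 * r1 * r2) <
        Real.sqrt (r2 ^ 2 + r3 ^ 2 + 2 * I23 * r2 * r3) +
        Real.sqrt (r1 ^ 2 + r3 ^ 2 + 2 * I13 * r1 * r3)) ∧
    {r : ℝ × ℝ × ℝ | 0 < r.1 ∧ 0 < r.2.1 ∧ 0 < r.2.2 ∧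
      Real.sqrt (r.2.1 ^ 2 + r.2.2 ^ 2 + 2 * I23 * r.2.1 * r.2.2) +
        Real.sqrt (r.1 ^ 2 + r.2.2 ^ 2 + 2 * I13 * r.1 * r.2.2) ≤
        Real.sqrt (r.1 ^ 2 + r.2.1 ^ 2 + 2 * I12 * r.1 * r.2.1)} = ∅ := by
  have key : ∀ r1 r2 r3 : ℝ, 0 < r1 → 0 < r2 → 0 < r3 →
      Real.sqrt (r1 ^ 2 + r2 ^ 2 + 2 * I12 * r1 * r2) <
        Real.sqrt (r2 ^ 2 + r3 ^ 2 + 2 * I23 * r2 * r3) +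
        Real.sqrt (r1 ^ 2 + r3 ^ 2 + 2 * I13 * r1 * r3) := by
    intro r1 r2 r3 h1 h2 h3
    have hl3 : Real.sqrt (r1 ^ 2 + r2 ^ 2 + 2 * I12 * r1 * r2) ≤ r1 + r2 := by
      refine Real.sqrt_le_iff.mpr ⟨by positivity, ?_⟩
      nlinarith [mul_nonneg (sub_nonneg.mpr hI12.2) (mul_pos h1 h2).le]
    have hl1 : r2 < Real.sqrt (r2 ^ 2 + r3 ^ 2 + 2 * I23 * r2 * r3) := by
      have : 0 < r3 ^ 2 + 2 * I23 * r2 * r3 := by positivity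
      exact Real.lt_sqrt_of_sq_lt (by linarith)
    have hl2 : r1 < Real.sqrt (r1 ^ 2 + r3 ^ 2 + 2 * I13 * r1 * r3) := by
      have : 0 < r3 ^ 2 + 2 * I13 * r1 * r3 := by positivity
      exact Real.lt_sqrt_of_sq_lt (by linarith)
    linarith
  refine ⟨key, Set.eq_empty_iff_forall_notMem.mpr ?_⟩
  rintro ⟨r1, r2, r3⟩ ⟨h1, h2, h3, h⟩
  exact absurd (key r1 r2 r3 h1 h2 h3) (not_lt.mpr h)
end

section
/- Fix I₁₂ > 1 and I₂₃, I₁₃ ∈ [0,∞), and let l₁, l₂, l₃ be the Euclidean inversive distance lengths as functions of r ∈ ℝ³_{>0}. Then there is a smooth function f : ℝ²_{>0} → ℝ_{>0} such that for every r ∈ ℝ³_{>0}: l₃(r) = l₁(r) + l₂(r) if and only if r₃ = f(r₁,r₂), and l₃(r) ≥ l₁(r) + l₂(r) if and only if r₃ ≤ f(r₁,r₂). Consequently, both the set {r ∈ ℝ³_{>0} : l₃ = l₁ + l₂} (the graph of f) and the set {r ∈ ℝ³_{>0} : l₃ ≥ l₁ + l₂} are nonempty and connected. -/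
/-!
Fix `r₁ = a`, `r₂ = b`, and let `A = I₁₃`, `B = I₂₃`, `C = I₁₂`. If `l₃ = l₁ + l₂`, squaring
twice gives, with `x = r₃`, the equation
`(C² - 1) a² b² - 2 a b q x - P x² = 0`, where `q = a (B + C A) + b (A + C B)` and
`P = a² (1 - A²) + b² (1 - B²) + 2 a b (C + A B)` (the quartic and cubic terms cancel).
Its discriminant satisfies `q² + (C² - 1) P = (A² + B² + C² + 2 A B C - 1) l₃²`, which is positive.
Solving for `1 / x` with the positive sign of the root gives the closed formula `degenerateRadius`,
from which smoothness and positivity are immediate.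

To see that this root is not one of those introduced by squaring, note that if `v₃` lies on the
segment `v₁v₂`, the law of cosines forces `l₁ = (b (b + C a) + (B b - A a) x) / l₃` and
`l₂ = (a (a + C b) + (A a - B b) x) / l₃`. These two candidates always add up to `l₃`; at the root
they are nonnegative and their squares are `l₁²` and `l₂²`, so they are the edge lengths.
Since `l₁ + l₂` is strictly increasing in `r₃`, the root is the only solution, and
`l₁ + l₂ ≤ l₃` holds exactly up to it. Finally, the two sets are continuous images of the convex sets
`(0, ∞)²` and `(0, ∞)² × (0, 1]`.
-/

open Real Set

/-- Euclidean inversive distance length `l₁` (edge joining `v₂, v₃`). -/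
noncomputable def eL1 (I23 : ℝ) (r : ℝ × ℝ × ℝ) : ℝ :=
  Real.sqrt (r.2.1 ^ 2 + r.2.2 ^ 2 + 2 * I23 * r.2.1 * r.2.2)

/-- Euclidean inversive distance length `l₂` (edge joining `v₁, v₃`). -/
noncomputable def eL2 (I13 : ℝ) (r : ℝ × ℝ × ℝ) : ℝ :=
  Real.sqrt (r.1 ^ 2 + r.2.2 ^ 2 + 2 * I13 * r.1 * r.2.2)

/-- Euclidean inversive distance length `l₃` (edge joining `v₁, v₂`). -/
noncomputable def eL3 (I12 : ℝ) (r : ℝ × ℝ × ℝ) : ℝ :=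
  Real.sqrt (r.1 ^ 2 + r.2.1 ^ 2 + 2 * I12 * r.1 * r.2.1)

/-- The value of `r₃` for which `l₃ = l₁ + l₂`, as a function of `a = r₁` and `b = r₂`, where
`A = I₁₃`, `B = I₂₃`, `C = I₁₂`. -/
noncomputable def degenerateRadius (A B C a b : ℝ) : ℝ :=
  (C ^ 2 - 1) * a * b / (a * (B + C * A) + b * (A + C * B) +
    √((A ^ 2 + B ^ 2 + C ^ 2 + 2 * A * B * C - 1) * (a ^ 2 + b ^ 2 + 2 * C * a * b)))

section

variable {A B C a b : ℝ}

lemma discr_pos (hA : 0 ≤ A) (hB : 0 ≤ B) (hC : 1 < C) (ha : 0 < a) (hb : 0 < b) :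
    0 < (A ^ 2 + B ^ 2 + C ^ 2 + 2 * A * B * C - 1) * (a ^ 2 + b ^ 2 + 2 * C * a * b) := by
  have hC0 : 0 < C := by linarith
  have h1 : 0 < C ^ 2 - 1 := by nlinarith
  have h2 : 0 ≤ A ^ 2 + B ^ 2 + 2 * A * B * C := by positivity
  exact mul_pos (by linarith) (by positivity)

lemma denom_pos (hA : 0 ≤ A) (hB : 0 ≤ B) (hC : 1 < C) (ha : 0 < a) (hb : 0 < b) :
    0 < a * (B + C * A) + b * (A + C * B) +
      √((A ^ 2 + B ^ 2 + C ^ 2 + 2 * A * B * C - 1) * (a ^ 2 + b ^ 2 + 2 * C * a * b)) := by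
  have hC0 : 0 < C := by linarith
  have := Real.sqrt_pos.2 (discr_pos hA hB hC ha hb)
  positivity

lemma degenerateRadius_pos (hA : 0 ≤ A) (hB : 0 ≤ B) (hC : 1 < C) (ha : 0 < a) (hb : 0 < b) :
    0 < degenerateRadius A B C a b := by
  have h1 : 0 < C ^ 2 - 1 := by nlinarith
  exact div_pos (by positivity) (denom_pos hA hB hC ha hb)

lemma contDiffOn_degenerateRadius (hA : 0 ≤ A) (hB : 0 ≤ B) (hC : 1 < C) :
    ContDiffOn ℝ (⊤ : ℕ∞) (fun p : ℝ × ℝ => degenerateRadius A B C p.1 p.2)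
      (Ioi (0:ℝ) ×ˢ Ioi (0:ℝ)) := by
  unfold degenerateRadius
  refine ContDiffOn.div (by fun_prop) (ContDiffOn.add (by fun_prop)
    (ContDiffOn.sqrt (by fun_prop) ?_)) ?_
  · rintro p ⟨h1, h2⟩
    exact (discr_pos hA hB hC h1 h2).ne'
  · rintro p ⟨h1, h2⟩
    exact (denom_pos hA hB hC h1 h2).ne'

/-- `degenerateRadius` is a root of the quadratic obtained from `l₃ = l₁ + l₂` by squaring twice. -/
lemma degenerateRadius_quadratic (hA : 0 ≤ A) (hB : 0 ≤ B) (hC : 1 < C) (ha : 0 < a) (hb : 0 < b)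
    {x : ℝ} (hx : x = degenerateRadius A B C a b) :
    (C ^ 2 - 1) * a ^ 2 * b ^ 2 - 2 * a * b * (a * (B + C * A) + b * (A + C * B)) * x
      - (a ^ 2 * (1 - A ^ 2) + b ^ 2 * (1 - B ^ 2) + 2 * a * b * (C + A * B)) * x ^ 2 = 0 := by
  have h1 : 0 < C ^ 2 - 1 := by nlinarith
  have hS := Real.sq_sqrt (discr_pos hA hB hC ha hb).le
  have hx' := (eq_div_iff (denom_pos hA hB hC ha hb).ne').1 hx
  set S := √((A ^ 2 + B ^ 2 + C ^ 2 + 2 * A * B * C - 1) * (a ^ 2 + b ^ 2 + 2 * C * a * b))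
  have hxS : x * S = (C ^ 2 - 1) * a * b - x * (a * (B + C * A) + b * (A + C * B)) := by
    linarith
  have hsq : x ^ 2 * S ^ 2 =
      ((C ^ 2 - 1) * a * b - x * (a * (B + C * A) + b * (A + C * B))) ^ 2 := by
    rw [← hxS]; ring
  rw [hS] at hsq
  refine (mul_eq_zero.1 ?_).resolve_left h1.ne'
  linear_combination -hsq

/-- These bounds make the two candidate lengths in `eL3_degenerateRadius` nonnegative. -/
lemma mul_degenerateRadius_le (hA : 0 ≤ A) (hB : 0 ≤ B) (hC : 1 < C) (ha : 0 < a) (hb : 0 < b) :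
    A * degenerateRadius A B C a b ≤ C * b ∧ B * degenerateRadius A B C a b ≤ C * a := by
  have hC0 : 0 < C := by linarith
  have hS := Real.sqrt_nonneg
    ((A ^ 2 + B ^ 2 + C ^ 2 + 2 * A * B * C - 1) * (a ^ 2 + b ^ 2 + 2 * C * a * b))
  have hd := denom_pos hA hB hC ha hb
  unfold degenerateRadius
  set S := √((A ^ 2 + B ^ 2 + C ^ 2 + 2 * A * B * C - 1) * (a ^ 2 + b ^ 2 + 2 * C * a * b))
  constructor
  · rw [mul_div_assoc', div_le_iff₀ hd, ← sub_nonneg]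
    have : 0 ≤ C * b * (a * B + b * (A + C * B) + S) + A * a * b := by positivity
    linarith
  · rw [mul_div_assoc', div_le_iff₀ hd, ← sub_nonneg]
    have : 0 ≤ C * a * (a * (B + C * A) + b * A + S) + B * a * b := by positivity
    linarith

lemma eL3_degenerateRadius (hA : 0 ≤ A) (hB : 0 ≤ B) (hC : 1 < C) (ha : 0 < a) (hb : 0 < b) :
    eL1 B (a, b, degenerateRadius A B C a b) + eL2 A (a, b, degenerateRadius A B C a b) =
      eL3 C (a, b, degenerateRadius A B C a b) := by
  have hC0 : 0 < C := by linarith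
  have hx0 := degenerateRadius_pos hA hB hC ha hb
  have hq := degenerateRadius_quadratic hA hB hC ha hb rfl
  obtain ⟨hAx, hBx⟩ := mul_degenerateRadius_le hA hB hC ha hb
  set x := degenerateRadius A B C a b
  have hL2 : 0 < a ^ 2 + b ^ 2 + 2 * C * a * b := by positivity
  have hL : 0 < √(a ^ 2 + b ^ 2 + 2 * C * a * b) := Real.sqrt_pos.2 hL2
  have hLsq := Real.sq_sqrt hL2.le
  simp only [eL1, eL2, eL3]
  set L := √(a ^ 2 + b ^ 2 + 2 * C * a * b)
  -- The lengths predicted by the law of cosines when `v₃` lies on the segment `v₁v₂`.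
  have h1 : √(b ^ 2 + x ^ 2 + 2 * B * b * x) = (b * (b + C * a) + (B * b - A * a) * x) / L := by
    rw [Real.sqrt_eq_iff_mul_self_eq (by positivity)]
    · field_simp
      rw [hLsq]
      linear_combination -hq
    · refine div_nonneg ?_ hL.le
      have : 0 ≤ b ^ 2 + B * b * x := by positivity
      nlinarith [mul_le_mul_of_nonneg_left hAx ha.le]
  have h2 : √(a ^ 2 + x ^ 2 + 2 * A * a * x) = (a * (a + C * b) + (A * a - B * b) * x) / L := by
    rw [Real.sqrt_eq_iff_mul_self_eq (by positivity)]
    · field_simp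
      rw [hLsq]
      linear_combination -hq
    · refine div_nonneg ?_ hL.le
      have : 0 ≤ a ^ 2 + A * a * x := by positivity
      nlinarith [mul_le_mul_of_nonneg_left hBx hb.le]
  rw [h1, h2, ← add_div, div_eq_iff hL.ne', ← sq, hLsq]
  ring

/-- Both `l₁` and `l₂` have this shape as functions of `r₃`, with `c = r₂` and `c = r₁`. -/
lemma strictMonoOn_edge {c I : ℝ} (hc : 0 < c) (hI : 0 ≤ I) :
    StrictMonoOn (fun x : ℝ => √(c ^ 2 + x ^ 2 + 2 * I * c * x)) (Ioi 0) := by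
  intro x hx y hy hxy
  have hx : 0 < x := hx
  have hy : 0 < y := hy
  refine Real.sqrt_lt_sqrt (by positivity) ?_
  have : 2 * I * c * x ≤ 2 * I * c * y := by gcongr
  nlinarith

lemma degenerateRadius_iff (hA : 0 ≤ A) (hB : 0 ≤ B) (hC : 1 < C) (r : ℝ × ℝ × ℝ)
    (h1 : 0 < r.1) (h2 : 0 < r.2.1) (h3 : 0 < r.2.2) :
    (eL3 C r = eL1 B r + eL2 A r ↔ r.2.2 = degenerateRadius A B C r.1 r.2.1) ∧
      (eL1 B r + eL2 A r ≤ eL3 C r ↔ r.2.2 ≤ degenerateRadius A B C r.1 r.2.1) := by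
  obtain ⟨a, b, x⟩ := r
  dsimp only at h1 h2 h3 ⊢
  have hmono : StrictMonoOn (fun x => eL1 B (a, b, x) + eL2 A (a, b, x)) (Ioi 0) :=
    (strictMonoOn_edge h2 hB).add (strictMonoOn_edge h1 hA)
  have hx0 := degenerateRadius_pos hA hB hC h1 h2
  have he := eL3_degenerateRadius hA hB hC h1 h2
  -- `l₃` does not depend on `r₃`.
  have h3c : eL3 C (a, b, x) = eL3 C (a, b, degenerateRadius A B C a b) := rfl
  rw [h3c, ← he]
  exact ⟨eq_comm.trans (hmono.eq_iff_eq h3 hx0), hmono.le_iff_le h3 hx0⟩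

end

/-- For `I₁₂ > 1` and `I₂₃, I₁₃ ≥ 0`, the degenerate locus `{l₃ = l₁ + l₂}` in
`ℝ³_{>0}` is the graph of a smooth positive function `f(r₁, r₂)`, and
`{l₃ ≥ l₁ + l₂}` is the region on or below the graph; consequently both sets
are nonempty and connected. -/
theorem euc_degenerate_locus_is_graph
    (I12 I23 I13 : ℝ) (hI12 : 1 < I12) (hI23 : 0 ≤ I23) (hI13 : 0 ≤ I13) :
    ∃ f : ℝ → ℝ → ℝ,
      ContDiffOn ℝ (⊤ : ℕ∞) (fun p : ℝ × ℝ => f p.1 p.2) (Ioi (0:ℝ) ×ˢ Ioi (0:ℝ)) ∧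
      (∀ r1 r2 : ℝ, 0 < r1 → 0 < r2 → 0 < f r1 r2) ∧
      (∀ r : ℝ × ℝ × ℝ, 0 < r.1 → 0 < r.2.1 → 0 < r.2.2 →
        (eL3 I12 r = eL1 I23 r + eL2 I13 r ↔ r.2.2 = f r.1 r.2.1) ∧
        (eL1 I23 r + eL2 I13 r ≤ eL3 I12 r ↔ r.2.2 ≤ f r.1 r.2.1)) ∧
      IsConnected {r : ℝ × ℝ × ℝ | 0 < r.1 ∧ 0 < r.2.1 ∧ 0 < r.2.2 ∧
        eL3 I12 r = eL1 I23 r + eL2 I13 r} ∧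
      IsConnected {r : ℝ × ℝ × ℝ | 0 < r.1 ∧ 0 < r.2.1 ∧ 0 < r.2.2 ∧
        eL1 I23 r + eL2 I13 r ≤ eL3 I12 r} := by
  have hf0 : ∀ r1 r2 : ℝ, 0 < r1 → 0 < r2 → 0 < degenerateRadius I13 I23 I12 r1 r2 :=
    fun _ _ h1 h2 => degenerateRadius_pos hI13 hI23 hI12 h1 h2
  have hiff := degenerateRadius_iff hI13 hI23 hI12
  have hsm := contDiffOn_degenerateRadius hI13 hI23 hI12
  refine ⟨degenerateRadius I13 I23 I12, hsm, hf0, hiff, ?_, ?_⟩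
  · have hQ : IsConnected (Ioi (0:ℝ) ×ˢ Ioi (0:ℝ)) := isConnected_Ioi.prod isConnected_Ioi
    convert hQ.image (fun p : ℝ × ℝ => (p.1, p.2, degenerateRadius I13 I23 I12 p.1 p.2))
      (continuousOn_fst.prodMk (continuousOn_snd.prodMk hsm.continuousOn)) using 1
    ext ⟨a, b, x⟩
    simp only [mem_ofPred_eq, mem_image, Prod.exists, mem_prod, mem_Ioi, Prod.mk.injEq]
    constructor
    · rintro ⟨ha, hb, hx, h⟩
      exact ⟨a, b, ⟨ha, hb⟩, rfl, rfl, ((hiff (a, b, x) ha hb hx).1.1 h).symm⟩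
    · rintro ⟨a, b, ⟨ha, hb⟩, rfl, rfl, rfl⟩
      exact ⟨ha, hb, hf0 a b ha hb, (hiff (a, b, _) ha hb (hf0 a b ha hb)).1.2 rfl⟩
  · have hQ : IsConnected ((Ioi (0:ℝ) ×ˢ Ioi (0:ℝ)) ×ˢ Ioc (0:ℝ) 1) :=
      (isConnected_Ioi.prod isConnected_Ioi).prod (isConnected_Ioc one_pos)
    have hcont : ContinuousOn
        (fun p : (ℝ × ℝ) × ℝ => (p.1.1, p.1.2, p.2 * degenerateRadius I13 I23 I12 p.1.1 p.1.2))
        ((Ioi (0:ℝ) ×ˢ Ioi (0:ℝ)) ×ˢ Ioc (0:ℝ) 1) :=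
      (by fun_prop : ContinuousOn (fun p : (ℝ × ℝ) × ℝ => p.1.1) _).prodMk
        ((by fun_prop : ContinuousOn (fun p : (ℝ × ℝ) × ℝ => p.1.2) _).prodMk
          (continuousOn_snd.mul (hsm.continuousOn.comp continuousOn_fst fun _ hp => hp.1)))
    convert hQ.image _ hcont using 1
    ext ⟨a, b, x⟩
    simp only [mem_ofPred_eq, mem_image, Prod.exists, mem_prod, mem_Ioi, mem_Ioc, Prod.mk.injEq]
    constructor
    · rintro ⟨ha, hb, hx, h⟩
      have hf := hf0 a b ha hb
      exact ⟨a, b, x / degenerateRadius I13 I23 I12 a b, ⟨⟨ha, hb⟩, div_pos hx hf,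
        (div_le_one hf).2 ((hiff (a, b, x) ha hb hx).2.1 h)⟩, rfl, rfl, div_mul_cancel₀ _ hf.ne'⟩
    · rintro ⟨a, b, t, ⟨⟨ha, hb⟩, ht0, ht1⟩, rfl, rfl, rfl⟩
      have hf := hf0 a b ha hb
      exact ⟨ha, hb, mul_pos ht0 hf, (hiff (a, b, _) ha hb (mul_pos ht0 hf)).2.2
        (mul_le_of_le_one_left hf.le ht1)⟩
end

section
/- Fix h ∈ ℝ. For a Euclidean triangle with side lengths l ∈ Ω and inner angles θᵢ(l) opposite lᵢ, define αᵢ(l) = ∫_{π/2}^{θᵢ(l)} sinʰ(t) dt, and introduce coordinates uᵢ = g(lᵢ) where g(t) = ln t if h = 0 and g(t) = −t^{−h}/h if h ≠ 0 (a real analytic diffeomorphism of ℝ_{>0} onto its image). Viewing Aᵢ(u) = αᵢ(l(u)) as functions of u on g(Ω): the matrix (∂Aᵢ/∂uⱼ) is symmetric (so the 1-form w_h = Σᵢ αᵢ(l) lᵢ^{−h−1} dlᵢ = Σᵢ Aᵢ duᵢ is closed), positive semidefinite at every point, and xᵀ(∂Aᵢ/∂uⱼ)x > 0 for every nonzero x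 ∈ ℝ³ with x₁+x₂+x₃ = 0 (equivalently, the potential ∫ᵘ w_h is locally convex in u and strictly locally convex on the hyperplane u₁+u₂+u₃ = 0). -/
/-!
Write `D = (a+b+c)(b+c-a)(c+a-b)(a+b-c) > 0` for the side lengths `a, b, c` (so `√D` is four times
the area) and `P = abc`.  The law of cosines gives `sin θᵢ = lᵢ √D / (2P)`, and differentiating it
gives `√D · lⱼ ∂θᵢ/∂lⱼ = Bᵢⱼ`, where `Bᵢᵢ = 2 lᵢ²` and `Bᵢⱼ = lₖ² - lᵢ² - lⱼ²` for distinct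
`i, j, k`.  Since `∂αᵢ/∂lⱼ = (sin θᵢ)ʰ ∂θᵢ/∂lⱼ`, the matrix of the theorem is
`Mᵢⱼ = K · lᵢʰ lⱼʰ · Bᵢⱼ` with `K = (√D / (2P))ʰ / √D > 0`, hence symmetric.

With `zᵢ = lᵢʰ xᵢ`, `p = z₀ - z₁`, `q = z₁ - z₂`, the quadratic form is
`2K (l₀² p² + (l₀² + l₂² - l₁²) p q + l₂² q²)`; the binary form in `p, q` has discriminant `-D < 0`,
so it is positive definite.  The form therefore vanishes only if all `lᵢʰ xᵢ` are equal, in which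
case the `xᵢ` all have the same sign and cannot sum to zero unless `x = 0`.
-/

open Real Set

/-- The inner angle of a Euclidean triangle with side lengths `l` opposite the
side of length `l i`. -/
noncomputable def eucAngle (l : Fin 3 → ℝ) (i : Fin 3) : ℝ :=
  Real.arccos ((l (i + 1) ^ 2 + l (i + 2) ^ 2 - l i ^ 2) /
    (2 * l (i + 1) * l (i + 2)))

/-- The natural domain of Euclidean side-length vectors. -/
def eucNatDomain : Set (Fin 3 → ℝ) :=
  {l | (∀ i, 0 < l i) ∧ ∀ i : Fin 3, l i < l (i + 1) + l (i + 2)}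

/-- The coefficient `αᵢ(l) = ∫_{π/2}^{θᵢ(l)} sinʰ t dt` of the 1-form `w_h`. -/
noncomputable def eucα (h : ℝ) (i : Fin 3) (l : Fin 3 → ℝ) : ℝ :=
  ∫ t in (Real.pi / 2)..(eucAngle l i), Real.sin t ^ h

/-- The matrix `(∂Aᵢ/∂uⱼ)` of the functions `Aᵢ(u) = αᵢ(l(u))` in the
coordinates `uᵢ = g(lᵢ)` (`g(t) = ln t` if `h = 0`, `g(t) = −t^{−h}/h` else),
expressed at the point `l`: since `duⱼ/dlⱼ = g'(lⱼ) = lⱼ^{−h−1}` in both cases,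
`∂Aᵢ/∂uⱼ = (∂αᵢ/∂lⱼ) · lⱼ^{h+1}`. -/
noncomputable def eucMh (h : ℝ) (l : Fin 3 → ℝ) (i j : Fin 3) : ℝ :=
  fderiv ℝ (eucα h i) l (Pi.single j 1) * l j ^ (h + 1)

namespace EucSchlaefli

/-- Sixteen times the squared area of the triangle with side lengths `l` (Heron). -/
def heron (l : Fin 3 → ℝ) : ℝ :=
  (l 0 + l 1 + l 2) * (l 1 + l 2 - l 0) * (l 2 + l 0 - l 1) * (l 0 + l 1 - l 2)

/-- The cosine of the angle opposite `l i`, by the law of cosines. -/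
noncomputable def cosAngle (l : Fin 3 → ℝ) (i : Fin 3) : ℝ :=
  (l (i + 1) ^ 2 + l (i + 2) ^ 2 - l i ^ 2) / (2 * l (i + 1) * l (i + 2))

/-- The normalised angle Jacobian `√D · lⱼ ∂θᵢ/∂lⱼ`. For `i ≠ j` in `Fin 3`, the index
`-(i + j)` is the third one. -/
def gram (l : Fin 3 → ℝ) (i j : Fin 3) : ℝ :=
  if i = j then 2 * l i ^ 2 else l (-(i + j)) ^ 2 - l i ^ 2 - l j ^ 2

lemma isOpen_domain : IsOpen eucNatDomain := by
  have : eucNatDomain = (⋂ i, {l : Fin 3 → ℝ | 0 < l i}) ∩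
      ⋂ i : Fin 3, {l : Fin 3 → ℝ | l i < l (i + 1) + l (i + 2)} := by
    ext l; simp [eucNatDomain]
  rw [this]
  exact (isOpen_iInter_of_finite fun i => isOpen_lt (by fun_prop) (by fun_prop)).inter
    (isOpen_iInter_of_finite fun i => isOpen_lt (by fun_prop) (by fun_prop))

lemma heron_pos {l : Fin 3 → ℝ} (hl : l ∈ eucNatDomain) : 0 < heron l := by
  obtain ⟨hp, ht⟩ := hl
  have h0 := hp 0
  have h1 := hp 1
  have h2 := hp 2
  have t0 : l 0 < l 1 + l 2 := ht 0
  have t1 : l 1 < l 2 + l 0 := ht 1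
  have t2 : l 2 < l 0 + l 1 := ht 2
  have : 0 < l 1 + l 2 - l 0 := by linarith
  have : 0 < l 2 + l 0 - l 1 := by linarith
  have : 0 < l 0 + l 1 - l 2 := by linarith
  unfold heron
  positivity

lemma heron_eq (l : Fin 3 → ℝ) (i : Fin 3) :
    heron l = (2 * l (i + 1) * l (i + 2)) ^ 2 - (l (i + 1) ^ 2 + l (i + 2) ^ 2 - l i ^ 2) ^ 2 := by
  have key : ∀ i : Fin 3, i = 0 ∨ i = 1 ∨ i = 2 := by decide
  rcases key i with rfl | rfl | rfl
  · change _ = (2 * l 1 * l 2) ^ 2 - (l 1 ^ 2 + l 2 ^ 2 - l 0 ^ 2) ^ 2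
    unfold heron; ring
  · change _ = (2 * l 2 * l 0) ^ 2 - (l 2 ^ 2 + l 0 ^ 2 - l 1 ^ 2) ^ 2
    unfold heron; ring
  · change _ = (2 * l 0 * l 1) ^ 2 - (l 0 ^ 2 + l 1 ^ 2 - l 2 ^ 2) ^ 2
    unfold heron; ring

lemma prod_eq (l : Fin 3 → ℝ) (i : Fin 3) : l 0 * l 1 * l 2 = l i * l (i + 1) * l (i + 2) := by
  have key : ∀ i : Fin 3, i = 0 ∨ i = 1 ∨ i = 2 := by decide
  rcases key i with rfl | rfl | rfl
  · rfl
  · change _ = l 1 * l 2 * l 0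
    ring
  · change _ = l 2 * l 0 * l 1
    ring

lemma one_sub_cosAngle_sq {l : Fin 3 → ℝ} (hl : l ∈ eucNatDomain) (i : Fin 3) :
    1 - cosAngle l i ^ 2 = heron l / (2 * l (i + 1) * l (i + 2)) ^ 2 := by
  have h1 := (hl.1 (i + 1)).ne'
  have h2 := (hl.1 (i + 2)).ne'
  rw [heron_eq l i, cosAngle]
  field_simp

lemma sqrt_one_sub {l : Fin 3 → ℝ} (hl : l ∈ eucNatDomain) (i : Fin 3) :
    √(1 - cosAngle l i ^ 2) = √(heron l) / (2 * l (i + 1) * l (i + 2)) := by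
  have h1 := hl.1 (i + 1)
  have h2 := hl.1 (i + 2)
  rw [one_sub_cosAngle_sq hl, Real.sqrt_div' _ (sq_nonneg _), Real.sqrt_sq (by positivity)]

lemma cosAngle_mem {l : Fin 3 → ℝ} (hl : l ∈ eucNatDomain) (i : Fin 3) :
    -1 < cosAngle l i ∧ cosAngle l i < 1 := by
  have h1 := hl.1 (i + 1)
  have h2 := hl.1 (i + 2)
  have hD := heron_pos hl
  have : 0 < 1 - cosAngle l i ^ 2 := by
    rw [one_sub_cosAngle_sq hl]; positivity
  exact abs_lt.1 ((sq_lt_one_iff_abs_lt_one _).1 (by linarith))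

lemma eucAngle_eq (l : Fin 3 → ℝ) (i : Fin 3) : eucAngle l i = arccos (cosAngle l i) := rfl

lemma angle_mem {l : Fin 3 → ℝ} (hl : l ∈ eucNatDomain) (i : Fin 3) :
    eucAngle l i ∈ Ioo 0 π := by
  obtain ⟨h1, h2⟩ := cosAngle_mem hl i
  rw [eucAngle_eq]
  refine ⟨Real.arccos_pos.2 h2, lt_of_le_of_ne (Real.arccos_le_pi _) fun h => ?_⟩
  exact absurd (Real.arccos_eq_pi.1 h) (not_le.2 h1)

lemma contDiffAt_cosAngle {l : Fin 3 → ℝ} (hl : l ∈ eucNatDomain) (i : Fin 3) :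
    ContDiffAt ℝ (⊤ : ℕ∞) (fun l => cosAngle l i) l := by
  have h1 := hl.1 (i + 1)
  have h2 := hl.1 (i + 2)
  unfold cosAngle
  exact ContDiffAt.div (by fun_prop) (by fun_prop) (by positivity)

lemma contDiffAt_angle {l : Fin 3 → ℝ} (hl : l ∈ eucNatDomain) (i : Fin 3) :
    ContDiffAt ℝ (⊤ : ℕ∞) (fun l => eucAngle l i) l := by
  obtain ⟨h1, h2⟩ := cosAngle_mem hl i
  exact ContDiffAt.comp l (Real.contDiffAt_arccos h1.ne' h2.ne) (contDiffAt_cosAngle hl i)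

lemma contDiffOn_sin_rpow (h : ℝ) :
    ContDiffOn ℝ (⊤ : ℕ∞) (fun t => sin t ^ h) (Ioo 0 π) :=
  Real.contDiff_sin.contDiffOn.rpow_const_of_ne fun _ ht => (Real.sin_pos_of_mem_Ioo ht).ne'

lemma hasDerivAt_integral (h : ℝ) {θ : ℝ} (hθ : θ ∈ Ioo 0 π) :
    HasDerivAt (fun y => ∫ t in (π / 2)..y, sin t ^ h) (sin θ ^ h) θ := by
  have hc := (contDiffOn_sin_rpow h).continuousOn
  have hsub : uIcc (π / 2) θ ⊆ Ioo 0 π :=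
    ordConnected_Ioo.uIcc_subset ⟨by positivity, by linarith [Real.pi_pos]⟩ hθ
  exact intervalIntegral.integral_hasDerivAt_right (hc.mono hsub).intervalIntegrable
    (hc.stronglyMeasurableAtFilter isOpen_Ioo θ hθ) (hc.continuousAt (isOpen_Ioo.mem_nhds hθ))

lemma contDiffOn_integral (h : ℝ) :
    ContDiffOn ℝ (⊤ : ℕ∞) (fun y => ∫ t in (π / 2)..y, sin t ^ h) (Ioo 0 π) := by
  rw [contDiffOn_infty_iff_deriv_of_isOpen isOpen_Ioo]
  refine ⟨fun θ hθ => (hasDerivAt_integral h hθ).differentiableAt.differentiableWithinAt, ?_⟩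
  exact (contDiffOn_sin_rpow h).congr fun θ hθ => (hasDerivAt_integral h hθ).deriv

lemma contDiffAt_eucα (h : ℝ) (i : Fin 3) {l : Fin 3 → ℝ} (hl : l ∈ eucNatDomain) :
    ContDiffAt ℝ (⊤ : ℕ∞) (eucα h i) l :=
  ContDiffAt.comp l ((contDiffOn_integral h).contDiffAt (isOpen_Ioo.mem_nhds (angle_mem hl i)))
    (contDiffAt_angle hl i)

/-- Law of sines: `sin θᵢ / lᵢ` does not depend on `i`. -/
lemma sin_angle {l : Fin 3 → ℝ} (hl : l ∈ eucNatDomain) (i : Fin 3) :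
    sin (eucAngle l i) = l i * (√(heron l) / (2 * (l 0 * l 1 * l 2))) := by
  have h0 := (hl.1 i).ne'
  have h1 := (hl.1 (i + 1)).ne'
  have h2 := (hl.1 (i + 2)).ne'
  rw [eucAngle_eq, Real.sin_arccos, sqrt_one_sub hl, prod_eq l i]
  field_simp

/-- Derivative of `αᵢ` in the direction `v`, before simplification: the chain rule through
`∫ sinʰ`, `arccos` and the law of cosines. -/
lemma fderiv_eucα (h : ℝ) (i : Fin 3) {l : Fin 3 → ℝ} (hl : l ∈ eucNatDomain) (v : Fin 3 → ℝ) :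
    fderiv ℝ (eucα h i) l v = sin (eucAngle l i) ^ h * (-(1 / √(1 - cosAngle l i ^ 2)) *
      (((2 * l (i + 1) * v (i + 1) + 2 * l (i + 2) * v (i + 2) - 2 * l i * v i) *
        (2 * l (i + 1) * l (i + 2)) - (l (i + 1) ^ 2 + l (i + 2) ^ 2 - l i ^ 2) *
        (2 * v (i + 1) * l (i + 2) + 2 * l (i + 1) * v (i + 2))) /
          (2 * l (i + 1) * l (i + 2)) ^ 2)) := by
  have hc : ∀ j, HasDerivAt (fun t : ℝ => (l + t • v) j) (v j) 0 := fun j => by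
    simpa using ((hasDerivAt_id (0 : ℝ)).mul_const (v j)).const_add (l j)
  have hz : l + (0 : ℝ) • v = l := by simp
  have h1 := (hl.1 (i + 1)).ne'
  have h2 := (hl.1 (i + 2)).ne'
  obtain ⟨b1, b2⟩ := cosAngle_mem hl i
  have hX := ((((hc (i + 1)).pow 2).add ((hc (i + 2)).pow 2)).sub ((hc i).pow 2)).div
    (((hc (i + 1)).const_mul 2).mul (hc (i + 2))) (by simp [h1, h2])
  have hθ := HasDerivAt.comp (h₂ := arccos) (h := fun t : ℝ => cosAngle (l + t • v) i) (0 : ℝ)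
    (by rw [hz]; exact Real.hasDerivAt_arccos b1.ne' b2.ne) hX
  have hα := HasDerivAt.comp (h₂ := fun y => ∫ t in (π / 2)..y, sin t ^ h)
    (h := fun t : ℝ => eucAngle (l + t • v) i) (0 : ℝ)
    (by rw [hz]; exact hasDerivAt_integral h (angle_mem hl i)) hθ
  have hf := ((contDiffAt_eucα h i hl).differentiableAt (by simp)).hasFDerivAt.hasLineDerivAt v
  have := HasDerivAt.unique hf hα
  rw [this]
  simp

lemma gram_cases (l : Fin 3 → ℝ) (i j : Fin 3) :
    (j = i ∧ gram l i j = 2 * l i ^ 2) ∨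
    (j = i + 1 ∧ gram l i j = l (i + 2) ^ 2 - l i ^ 2 - l (i + 1) ^ 2) ∨
    (j = i + 2 ∧ gram l i j = l (i + 1) ^ 2 - l i ^ 2 - l (i + 2) ^ 2) := by
  have key : ∀ i j : Fin 3, j = i ∨ (j = i + 1 ∧ i ≠ j ∧ -(i + j) = i + 2) ∨
    (j = i + 2 ∧ i ≠ j ∧ -(i + j) = i + 1) := by decide
  rcases key i j with rfl | ⟨hj, hn, hk⟩ | ⟨hj, hn, hk⟩
  · simp [gram]
  · right; left
    refine ⟨hj, ?_⟩
    rw [gram, if_neg hn, hk, hj]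
  · right; right
    refine ⟨hj, ?_⟩
    rw [gram, if_neg hn, hk, hj]

lemma eucMh_eq (h : ℝ) {l : Fin 3 → ℝ} (hl : l ∈ eucNatDomain) (i j : Fin 3) :
    eucMh h l i j = (√(heron l) / (2 * (l 0 * l 1 * l 2))) ^ h / √(heron l) *
      (l i ^ h * l j ^ h * gram l i j) := by
  have p0 := hl.1 0
  have p1 := hl.1 1
  have p2 := hl.1 2
  have h0 := (hl.1 i).ne'
  have h1 := (hl.1 (i + 1)).ne'
  have h2 := (hl.1 (i + 2)).ne'
  have hR : √(heron l) ≠ 0 := (Real.sqrt_pos.2 (heron_pos hl)).ne'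
  have e1 : i + 1 ≠ i := (by decide : ∀ i : Fin 3, i + 1 ≠ i) i
  have e2 : i + 2 ≠ i := (by decide : ∀ i : Fin 3, i + 2 ≠ i) i
  have e3 : i + 2 ≠ i + 1 := (by decide : ∀ i : Fin 3, i + 2 ≠ i + 1) i
  rw [eucMh, fderiv_eucα h i hl, sqrt_one_sub hl, sin_angle hl,
    Real.mul_rpow (hl.1 i).le (by positivity), Real.rpow_add_one (hl.1 j).ne']
  rcases gram_cases l i j with ⟨rfl, hg⟩ | ⟨rfl, hg⟩ | ⟨rfl, hg⟩
  · rw [hg]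
    simp only [Pi.single_eq_same, Pi.single_eq_of_ne e1, Pi.single_eq_of_ne e2]
    generalize (√(heron l) / (2 * (l 0 * l 1 * l 2))) ^ h = K
    field_simp
    ring
  · rw [hg]
    simp only [Pi.single_eq_same, Pi.single_eq_of_ne e1.symm, Pi.single_eq_of_ne e3]
    generalize (√(heron l) / (2 * (l 0 * l 1 * l 2))) ^ h = K
    field_simp
    ring
  · rw [hg]
    simp only [Pi.single_eq_same, Pi.single_eq_of_ne e2.symm, Pi.single_eq_of_ne e3.symm]
    generalize (√(heron l) / (2 * (l 0 * l 1 * l 2))) ^ h = K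
    field_simp
    ring

lemma gram_symm (l : Fin 3 → ℝ) (i j : Fin 3) : gram l i j = gram l j i := by
  unfold gram
  by_cases hij : i = j
  · rw [hij]
  · rw [if_neg hij, if_neg (Ne.symm hij), add_comm i j]; ring

/-- The quadratic form reduced to the differences of `zᵢ = lᵢʰ xᵢ`; completing the square uses
that the binary form has discriminant `-heron l`. -/
lemma quadForm_eq (h : ℝ) {l : Fin 3 → ℝ} (hl : l ∈ eucNatDomain) (x : Fin 3 → ℝ) :
    ∑ i, ∑ j, x i * eucMh h l i j * x j =
      (√(heron l) / (2 * (l 0 * l 1 * l 2))) ^ h / √(heron l) / (2 * l 0 ^ 2) *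
      ((2 * l 0 ^ 2 * (l 0 ^ h * x 0 - l 1 ^ h * x 1) +
          (l 0 ^ 2 + l 2 ^ 2 - l 1 ^ 2) * (l 1 ^ h * x 1 - l 2 ^ h * x 2)) ^ 2 +
        heron l * (l 1 ^ h * x 1 - l 2 ^ h * x 2) ^ 2) := by
  have h0 := (hl.1 0).ne'
  simp only [eucMh_eq h hl, Fin.sum_univ_three]
  generalize (√(heron l) / (2 * (l 0 * l 1 * l 2))) ^ h / √(heron l) = K
  have g00 : gram l 0 0 = 2 * l 0 ^ 2 := rfl
  have g11 : gram l 1 1 = 2 * l 1 ^ 2 := rfl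
  have g22 : gram l 2 2 = 2 * l 2 ^ 2 := rfl
  have g01 : gram l 0 1 = l 2 ^ 2 - l 0 ^ 2 - l 1 ^ 2 := rfl
  have g02 : gram l 0 2 = l 1 ^ 2 - l 0 ^ 2 - l 2 ^ 2 := rfl
  have g12 : gram l 1 2 = l 0 ^ 2 - l 1 ^ 2 - l 2 ^ 2 := rfl
  rw [gram_symm l 1 0, gram_symm l 2 0, gram_symm l 2 1, g00, g11, g22, g01, g02, g12, heron]
  field_simp
  ring

end EucSchlaefli

open EucSchlaefli in
/-- Theorem 4.1(1): for every `h ∈ ℝ`, the functions `αᵢ` are smooth on the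
natural domain `Ω`, and in the coordinates `uᵢ = g(lᵢ)` the matrix
`(∂Aᵢ/∂uⱼ)` is symmetric (so `w_h = Σᵢ αᵢ lᵢ^{−h−1} dlᵢ = Σᵢ Aᵢ duᵢ` is
closed), positive semidefinite, and positive definite on the hyperplane
`x₁ + x₂ + x₃ = 0` (so `∫ᵘ w_h` is locally convex in `u`, strictly so on
`u₁ + u₂ + u₃ = 0`). -/
theorem euc_schlaefli_form (h : ℝ) :
    (∀ i, ContDiffOn ℝ (⊤ : ℕ∞) (eucα h i) eucNatDomain) ∧
    ∀ l ∈ eucNatDomain,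
      (∀ i j, eucMh h l i j = eucMh h l j i) ∧
      (∀ x : Fin 3 → ℝ, 0 ≤ ∑ i, ∑ j, x i * eucMh h l i j * x j) ∧
      (∀ x : Fin 3 → ℝ, x ≠ 0 → x 0 + x 1 + x 2 = 0 →
        0 < ∑ i, ∑ j, x i * eucMh h l i j * x j) := by
  refine ⟨fun i l hl => (contDiffAt_eucα h i hl).contDiffWithinAt, fun l hl => ⟨?_, ?_, ?_⟩⟩
  · intro i j
    rw [eucMh_eq h hl, eucMh_eq h hl, gram_symm l i j]
    ring
  all_goals
    have p0 := hl.1 0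
    have p1 := hl.1 1
    have p2 := hl.1 2
    have hD := heron_pos hl
    intro x
    rw [quadForm_eq h hl]
  · positivity
  · intro hx hs
    refine mul_pos (by positivity) ?_
    have a0 : 0 < l 0 ^ h := by positivity
    have a1 : 0 < l 1 ^ h := by positivity
    have a2 : 0 < l 2 ^ h := by positivity
    generalize l 0 ^ h = a at *
    generalize l 1 ^ h = b at *
    generalize l 2 ^ h = c at *
    by_cases hq : b * x 1 - c * x 2 = 0
    · by_cases hp : a * x 0 - b * x 1 = 0
      · -- All `zᵢ` agree; call the common value `z`, so `xᵢ = z / lᵢʰ`.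
        exfalso
        apply hx
        have e0 : x 0 = a * x 0 / a := by field_simp
        have e1 : x 1 = a * x 0 / b := by field_simp; linarith
        have e2 : x 2 = a * x 0 / c := by field_simp; linarith
        have hz : a * x 0 * (1 / a + 1 / b + 1 / c) = 0 := by
          rw [← hs, e1, e2]
          field_simp
        have hz' : a * x 0 = 0 :=
          (mul_eq_zero.1 hz).resolve_right (by positivity)
        rw [hz', zero_div] at e0 e1 e2
        ext i; fin_cases i <;> assumption
      · rw [hq]
        have : 0 < (2 * l 0 ^ 2 * (a * x 0 - b * x 1)) ^ 2 := by positivity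
        simpa using this
    · have : 0 < heron l * (b * x 1 - c * x 2) ^ 2 := by positivity
      positivity
end

section
/- Fix h ∈ ℝ. For a spherical triangle with side lengths l ∈ Ω_S and inner angles θᵢ(l) opposite lᵢ, define αᵢ(l) = ∫_{π/2}^{θᵢ(l)} sinʰ(t) dt, and introduce coordinates uᵢ = g(lᵢ) where g(t) = ∫_{π/2}^{t} sin^{−h−1}(x) dx (a real analytic diffeomorphism of (0,π) onto its image). Viewing Aᵢ(u) = αᵢ(l(u)) as functions of u on g(Ω_S): the matrix (∂Aᵢ/∂uⱼ) is symmetric (so the 1-form w_h = Σᵢ αᵢ(l) sin^{−h−1}(lᵢ) dlᵢ = Σᵢ Aᵢ duᵢ is closed) and positive definite at every point (equivalently, the potential ∫ᵘ w_h is strictly locally convex in u). -/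
/-! Write `cᵢ = cos lᵢ`, `sᵢ = sin lᵢ` and let `D = 1 - c₀² - c₁² - c₂² + 2 c₀ c₁ c₂` be the Gram
determinant of the vertices of the triangle; it is positive on the natural domain
(`sphGram_pos`). The cosine rule gives `sin θᵢ = √D / (sⱼ sₖ) = lam * sᵢ` with
`lam = √D / (s₀ s₁ s₂)` independent of `i` (the sine rule), and differentiating it gives
`∂θᵢ/∂lⱼ = (sᵢ / √D) Gᵢⱼ`, where `G` has diagonal entries `1` and off-diagonal entries `-cos θₖ`
(`fderiv_sphα`). Consequently
`∂Aᵢ/∂uⱼ = sinʰ θᵢ * (∂θᵢ/∂lⱼ) * sⱼ^(h+1) = (lamʰ / √D) * sᵢ^(h+1) * sⱼ^(h+1) * Gᵢⱼ`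
(`sphMh_eq`), which is symmetric. It is positive definite because `G` is: completing the square in
the first variable leaves a binary form whose discriminant is controlled by
`det G = D² / (s₀ s₁ s₂)² > 0` (`quadForm_pos`, `sphG_det`). Smoothness of `αᵢ` holds because
`cos θᵢ` stays in `(-1, 1)`, where `arccos` is smooth, and `θᵢ` stays in `(0, π)`, where `sinʰ` is
smooth. -/

open Real Set

/-- The inner angle of a spherical triangle with side lengths `l` opposite the
side of length `l i`. -/
noncomputable def sphAngle (l : Fin 3 → ℝ) (i : Fin 3) : ℝ :=
  Real.arccos ((Real.cos (l i) - Real.cos (l (i + 1)) * Real.cos (l (i + 2))) /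
    (Real.sin (l (i + 1)) * Real.sin (l (i + 2))))

/-- The natural domain of spherical side-length vectors. -/
def sphNatDomain : Set (Fin 3 → ℝ) :=
  {l | (∀ i, l i ∈ Set.Ioo 0 Real.pi) ∧
    (∀ i : Fin 3, l i < l (i + 1) + l (i + 2)) ∧
    l 0 + l 1 + l 2 < 2 * Real.pi}

/-- The coefficient `αᵢ(l) = ∫_{π/2}^{θᵢ(l)} sinʰ t dt` of the 1-form `w_h`. -/
noncomputable def sphα (h : ℝ) (i : Fin 3) (l : Fin 3 → ℝ) : ℝ :=
  ∫ t in (Real.pi / 2)..(sphAngle l i), Real.sin t ^ h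

/-- The matrix `(∂Aᵢ/∂uⱼ)` of the functions `Aᵢ(u) = αᵢ(l(u))` in the
coordinates `uᵢ = g(lᵢ)`, `g(t) = ∫_{π/2}^t sin^{−h−1} x dx`, expressed at the
point `l`: since `duⱼ/dlⱼ = g'(lⱼ) = sin^{−h−1}(lⱼ)`, one has
`∂Aᵢ/∂uⱼ = (∂αᵢ/∂lⱼ) · sin^{h+1}(lⱼ)`. -/
noncomputable def sphMh (h : ℝ) (l : Fin 3 → ℝ) (i j : Fin 3) : ℝ :=
  fderiv ℝ (sphα h i) l (Pi.single j 1) * Real.sin (l j) ^ (h + 1)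

/-- The cosine of the angle opposite `l i`, as given by the spherical cosine rule. -/
noncomputable def sphCos (l : Fin 3 → ℝ) (i : Fin 3) : ℝ :=
  (cos (l i) - cos (l (i + 1)) * cos (l (i + 2))) / (sin (l (i + 1)) * sin (l (i + 2)))

/-- The Gram determinant of the unit vectors at the vertices of the triangle. -/
noncomputable def sphGram (l : Fin 3 → ℝ) : ℝ :=
  1 - cos (l 0) ^ 2 - cos (l 1) ^ 2 - cos (l 2) ^ 2 + 2 * cos (l 0) * cos (l 1) * cos (l 2)

/-- The angle Gram matrix: `1` on the diagonal and `-cos θₖ` at the entry `(i, j)` with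
`{i, j, k} = {0, 1, 2}`. As `0 + 1 + 2 = 0` in `Fin 3`, the third index is `k = -(i + j)`. -/
noncomputable def sphG (l : Fin 3 → ℝ) (i j : Fin 3) : ℝ :=
  if i = j then 1 else -sphCos l (-(i + j))

lemma sphGram_eq (l : Fin 3 → ℝ) (i : Fin 3) :
    sphGram l = (sin (l (i + 1)) * sin (l (i + 2))) ^ 2 -
      (cos (l i) - cos (l (i + 1)) * cos (l (i + 2))) ^ 2 := by
  rw [mul_pow, sin_sq, sin_sq]
  fin_cases i <;> simp [sphGram] <;> ring

lemma sin_pos_of_mem {l : Fin 3 → ℝ} (hl : l ∈ sphNatDomain) (i : Fin 3) : 0 < sin (l i) :=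
  sin_pos_of_mem_Ioo (hl.1 i)

/-- The Gram determinant factors as
`(cos (l₁ - l₂) - cos l₀) * (cos l₀ - cos (l₁ + l₂))`, and each factor is positive by one half of
the conditions defining the domain. -/
lemma sphGram_pos {l : Fin 3 → ℝ} (hl : l ∈ sphNatDomain) : 0 < sphGram l := by
  obtain ⟨h1, h2, h3⟩ := hl
  have a0 := h1 0
  have a1 := h1 1
  have a2 := h1 2
  have t0 : l 0 < l 1 + l 2 := h2 0
  have t1 : l 1 < l 2 + l 0 := h2 1
  have t2 : l 2 < l 0 + l 1 := h2 2
  simp only [mem_Ioo] at a0 a1 a2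
  have e1 : cos (l 0) < cos (l 1 - l 2) := by
    rw [← cos_abs (l 1 - l 2)]
    refine cos_lt_cos_of_nonneg_of_le_pi (abs_nonneg _) (by linarith) ?_
    rw [abs_lt]; constructor <;> linarith
  have e2 : cos (l 1 + l 2) < cos (l 0) := by
    rcases le_total (l 1 + l 2) π with hp | hp
    · exact cos_lt_cos_of_nonneg_of_le_pi (by linarith) hp t0
    · rw [← cos_two_pi_sub]
      exact cos_lt_cos_of_nonneg_of_le_pi (by linarith) (by linarith) (by linarith)
  have := mul_pos (sub_pos.2 e1) (sub_pos.2 e2)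
  rw [sphGram_eq l 0]
  rw [cos_sub, cos_add] at this
  simp only [zero_add]
  linarith

lemma one_sub_sphCos_sq {l : Fin 3 → ℝ} (hl : l ∈ sphNatDomain) (i : Fin 3) :
    1 - sphCos l i ^ 2 = sphGram l / (sin (l (i + 1)) * sin (l (i + 2))) ^ 2 := by
  have := (sin_pos_of_mem hl (i + 1)).ne'
  have := (sin_pos_of_mem hl (i + 2)).ne'
  rw [sphGram_eq l i, sphCos]
  field_simp

lemma sphCos_mem {l : Fin 3 → ℝ} (hl : l ∈ sphNatDomain) (i : Fin 3) :
    -1 < sphCos l i ∧ sphCos l i < 1 := by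
  have h1 := sin_pos_of_mem hl (i + 1)
  have h2 := sin_pos_of_mem hl (i + 2)
  have h3 := sphGram_pos hl
  have h4 : 0 < 1 - sphCos l i ^ 2 := by rw [one_sub_sphCos_sq hl]; positivity
  exact abs_lt.1 ((sq_lt_one_iff_abs_lt_one _).1 (by linarith))

lemma sphAngle_mem {l : Fin 3 → ℝ} (hl : l ∈ sphNatDomain) (i : Fin 3) :
    sphAngle l i ∈ Ioo 0 π :=
  ⟨arccos_pos.2 (sphCos_mem hl i).2, arccos_lt_pi.2 (sphCos_mem hl i).1⟩

lemma sqrt_one_sub_sphCos_sq {l : Fin 3 → ℝ} (hl : l ∈ sphNatDomain) (i : Fin 3) :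
    √(1 - sphCos l i ^ 2) = √(sphGram l) / (sin (l (i + 1)) * sin (l (i + 2))) := by
  have h1 := sin_pos_of_mem hl (i + 1)
  have h2 := sin_pos_of_mem hl (i + 2)
  rw [one_sub_sphCos_sq hl, sqrt_div' _ (by positivity), sqrt_sq (by positivity)]

/-- The spherical sine rule. -/
lemma sin_sphAngle {l : Fin 3 → ℝ} (hl : l ∈ sphNatDomain) (i : Fin 3) :
    sin (sphAngle l i) =
      √(sphGram l) / (sin (l 0) * sin (l 1) * sin (l 2)) * sin (l i) := by
  have h0 := (sin_pos_of_mem hl 0).ne'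
  have h1 := (sin_pos_of_mem hl 1).ne'
  have h2 := (sin_pos_of_mem hl 2).ne'
  have := sqrt_one_sub_sphCos_sq hl i
  change sin (arccos (sphCos l i)) = _
  rw [sin_arccos, this]
  fin_cases i <;> simp <;> field_simp

lemma isOpen_sphNatDomain : IsOpen sphNatDomain := by
  have : sphNatDomain = (⋂ i : Fin 3, {l : Fin 3 → ℝ | l i ∈ Ioo 0 π}) ∩
      ((⋂ i : Fin 3, {l | l i < l (i + 1) + l (i + 2)}) ∩
        {l | l 0 + l 1 + l 2 < 2 * π}) := by
    ext l; simp [sphNatDomain]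
  rw [this]
  refine (isOpen_iInter_of_finite fun i => ?_).inter
    ((isOpen_iInter_of_finite fun i => ?_).inter ?_)
  · exact isOpen_Ioo.preimage (continuous_apply i)
  · exact isOpen_lt (by fun_prop) (by fun_prop)
  · exact isOpen_lt (by fun_prop) (by fun_prop)

lemma hasDerivAt_integral_sin_rpow (h : ℝ) {θ : ℝ} (hθ : θ ∈ Ioo 0 π) :
    HasDerivAt (fun x => ∫ t in (π / 2)..x, sin t ^ h) (sin θ ^ h) θ := by
  have hc : ContinuousOn (fun t => sin t ^ h) (Ioo 0 π) :=
    continuous_sin.continuousOn.rpow_const fun x hx => Or.inl (sin_pos_of_mem_Ioo hx).ne'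
  have hsub : uIcc (π / 2) θ ⊆ Ioo 0 π :=
    ordConnected_Ioo.uIcc_subset ⟨by positivity, by linarith [pi_pos]⟩ hθ
  exact intervalIntegral.integral_hasDerivAt_right (hc.mono hsub).intervalIntegrable
    (hc.stronglyMeasurableAtFilter isOpen_Ioo θ hθ) (hc.continuousAt (isOpen_Ioo.mem_nhds hθ))

lemma contDiffOn_integral_sin_rpow (h : ℝ) :
    ContDiffOn ℝ (⊤ : ℕ∞) (fun x => ∫ t in (π / 2)..x, sin t ^ h) (Ioo 0 π) := by
  rw [contDiffOn_infty_iff_deriv_of_isOpen isOpen_Ioo]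
  refine ⟨fun x hx => (hasDerivAt_integral_sin_rpow h hx).differentiableAt.differentiableWithinAt,
    ?_⟩
  refine ContDiffOn.congr (f := fun t => sin t ^ h) ?_
    fun x hx => (hasDerivAt_integral_sin_rpow h hx).deriv
  exact contDiff_sin.contDiffOn.rpow_const_of_ne fun x hx => (sin_pos_of_mem_Ioo hx).ne'

lemma contDiffOn_sphα (h : ℝ) (i : Fin 3) :
    ContDiffOn ℝ (⊤ : ℕ∞) (sphα h i) sphNatDomain := by
  refine (contDiffOn_integral_sin_rpow h).comp (g := fun x => ∫ t in (π / 2)..x, sin t ^ h)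
    (f := fun l => sphAngle l i) ?_ fun l hl => sphAngle_mem hl i
  have hC : ContDiffOn ℝ (⊤ : ℕ∞) (fun l => sphCos l i) sphNatDomain := by
    unfold sphCos
    refine ContDiffOn.div (ContDiff.contDiffOn (by fun_prop)) (ContDiff.contDiffOn (by fun_prop))
      fun l hl => (mul_pos (sin_pos_of_mem hl _) (sin_pos_of_mem hl _)).ne'
  intro l hl
  exact (contDiffAt_arccos (sphCos_mem hl i).1.ne' (sphCos_mem hl i).2.ne).comp_contDiffWithinAt l
    (hC l hl)

/-- The derivative of `θᵢ` in direction `v` is `(sᵢ / √D) * ∑ⱼ Gᵢⱼ vⱼ`; here it is multiplied by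
the factor `sinʰ θᵢ` from the upper limit of the integral. It is computed along the line
`t ↦ l + t v`. -/
lemma fderiv_sphα (h : ℝ) {l : Fin 3 → ℝ} (hl : l ∈ sphNatDomain) (i : Fin 3) (v : Fin 3 → ℝ) :
    fderiv ℝ (sphα h i) l v = sin (sphAngle l i) ^ h *
      (sin (l i) / √(sphGram l) * ∑ j, sphG l i j * v j) := by
  have hd : DifferentiableAt ℝ (sphα h i) l :=
    ((contDiffOn_sphα h i).contDiffAt (isOpen_sphNatDomain.mem_nhds hl)).differentiableAt
      (by simp)
  have hx : ∀ k, HasDerivAt (fun t : ℝ => (l + t • v) k) (v k) 0 := fun k => by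
    simpa using ((hasDerivAt_id (0 : ℝ)).mul_const (v k)).const_add (l k)
  have hcos : ∀ k, HasDerivAt (fun t : ℝ => cos ((l + t • v) k)) (-sin (l k) * v k) 0 :=
    fun k => by simpa using (hx k).cos
  have hsin : ∀ k, HasDerivAt (fun t : ℝ => sin ((l + t • v) k)) (cos (l k) * v k) 0 :=
    fun k => by simpa using (hx k).sin
  have hs : ∀ k, sin (l k) ≠ 0 := fun k => (sin_pos_of_mem hl k).ne'
  have hC := ((hcos i).sub ((hcos (i + 1)).mul (hcos (i + 2)))).div
    ((hsin (i + 1)).mul (hsin (i + 2))) (by simpa using ⟨hs (i + 1), hs (i + 2)⟩)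
  have hC' : HasDerivAt (fun t : ℝ => sphCos (l + t • v) i) _ 0 := hC
  have hA : HasDerivAt (fun t : ℝ => sphAngle (l + t • v) i) _ 0 :=
    HasDerivAt.comp (h₂ := arccos) (h := fun t : ℝ => sphCos (l + t • v) i) 0
      (by simpa using hasDerivAt_arccos (sphCos_mem hl i).1.ne' (sphCos_mem hl i).2.ne) hC'
  have hF : HasDerivAt (fun t : ℝ => sphα h i (l + t • v)) _ 0 :=
    HasDerivAt.comp (h₂ := fun x => ∫ t in (π / 2)..x, sin t ^ h)
      (h := fun t : ℝ => sphAngle (l + t • v) i) 0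
      (by simpa using hasDerivAt_integral_sin_rpow h (sphAngle_mem hl i)) hA
  have hline : HasDerivAt (fun t : ℝ => l + t • v) v 0 := hasDerivAt_pi.2 hx
  have hL : HasDerivAt (fun t : ℝ => sphα h i (l + t • v)) (fderiv ℝ (sphα h i) l v) 0 :=
    HasFDerivAt.comp_hasDerivAt (l := sphα h i) (f := fun t : ℝ => l + t • v) 0
      (by simpa using hd.hasFDerivAt) hline
  rw [hL.unique hF, sqrt_one_sub_sphCos_sq hl]
  congr 1
  have hD : √(sphGram l) ≠ 0 := (sqrt_pos.2 (sphGram_pos hl)).ne'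
  have h0 := hs 0
  have h1 := hs 1
  have h2 := hs 2
  have q0 := sin_sq (l 0)
  have q1 := sin_sq (l 1)
  have q2 := sin_sq (l 2)
  have n1 : (-1 : Fin 3) = 2 := rfl
  have n2 : (-2 : Fin 3) = 1 := rfl
  clear hL hF hA hC hC' hx hsin hcos hline hd hs
  fin_cases i <;> simp [Fin.sum_univ_three, sphG, sphCos, n1, n2] <;> field_simp <;> grind

lemma sphMh_eq (h : ℝ) {l : Fin 3 → ℝ} (hl : l ∈ sphNatDomain) (i j : Fin 3) :
    sphMh h l i j = (√(sphGram l) / (sin (l 0) * sin (l 1) * sin (l 2))) ^ h / √(sphGram l) *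
      (sin (l i) ^ (h + 1) * sin (l j) ^ (h + 1) * sphG l i j) := by
  have h0 := sin_pos_of_mem hl 0
  have h1 := sin_pos_of_mem hl 1
  have h2 := sin_pos_of_mem hl 2
  have hi := sin_pos_of_mem hl i
  rw [sphMh, fderiv_sphα h hl, sin_sphAngle hl, mul_rpow (by positivity) hi.le,
    rpow_add_one hi.ne']
  simp only [Pi.single_apply, mul_ite, mul_one, mul_zero, Finset.sum_ite_eq', Finset.mem_univ,
    if_true]
  ring

lemma sphG_comm (l : Fin 3 → ℝ) (i j : Fin 3) : sphG l i j = sphG l j i := by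
  simp only [sphG, eq_comm, add_comm]

lemma sphG_det {l : Fin 3 → ℝ} (hl : l ∈ sphNatDomain) :
    1 - sphCos l 0 ^ 2 - sphCos l 1 ^ 2 - sphCos l 2 ^ 2
      - 2 * sphCos l 0 * sphCos l 1 * sphCos l 2 =
      (sphGram l / (sin (l 0) * sin (l 1) * sin (l 2))) ^ 2 := by
  have h0 := (sin_pos_of_mem hl 0).ne'
  have h1 := (sin_pos_of_mem hl 1).ne'
  have h2 := (sin_pos_of_mem hl 2).ne'
  have q0 := sin_sq (l 0)
  have q1 := sin_sq (l 1)
  have q2 := sin_sq (l 2)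
  simp only [sphCos, sphGram]
  simp
  field_simp
  simp only [q0, q1, q2]
  ring

/-- A ternary form with unit diagonal is positive definite when its leading `2 × 2` minor and its
determinant are positive. -/
lemma quadForm_pos {a b c x y z : ℝ} (hc : 0 < 1 - c ^ 2)
    (hdet : 0 < 1 - a ^ 2 - b ^ 2 - c ^ 2 - 2 * a * b * c) (hne : ¬(x = 0 ∧ y = 0 ∧ z = 0)) :
    0 < x ^ 2 + y ^ 2 + z ^ 2 - 2 * c * x * y - 2 * b * x * z - 2 * a * y * z := by
  -- Lagrange reduction, multiplied through by the minor `1 - c²`.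
  have key : (1 - c ^ 2) *
      (x ^ 2 + y ^ 2 + z ^ 2 - 2 * c * x * y - 2 * b * x * z - 2 * a * y * z) =
      (1 - c ^ 2) * (x - c * y - b * z) ^ 2 + ((1 - c ^ 2) * y - (a + b * c) * z) ^ 2 +
        (1 - a ^ 2 - b ^ 2 - c ^ 2 - 2 * a * b * c) * z ^ 2 := by ring
  refine pos_of_mul_pos_right (a := 1 - c ^ 2) ?_ hc.le
  rw [key]
  by_cases hz : z = 0
  · subst hz
    by_cases hy : y = 0
    · subst hy
      have hx : x ≠ 0 := fun hx => hne ⟨hx, rfl, rfl⟩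
      simp only [mul_zero, sub_zero]
      positivity
    · have : 0 < ((1 - c ^ 2) * y) ^ 2 := by positivity
      simp only [mul_zero, sub_zero]
      positivity
  · positivity

/-- Theorem 4.1(2): for every `h ∈ ℝ`, the functions `αᵢ` are smooth on the
natural domain `Ω_S`, and in the coordinates `uᵢ = g(lᵢ)` the matrix
`(∂Aᵢ/∂uⱼ)` is symmetric (so `w_h = Σᵢ αᵢ sin^{−h−1}(lᵢ) dlᵢ = Σᵢ Aᵢ duᵢ` is
closed) and positive definite at every point (so the potential `∫ᵘ w_h` is
strictly locally convex in `u`). -/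
theorem sph_schlaefli_form (h : ℝ) :
    (∀ i, ContDiffOn ℝ (⊤ : ℕ∞) (sphα h i) sphNatDomain) ∧
    ∀ l ∈ sphNatDomain,
      (∀ i j, sphMh h l i j = sphMh h l j i) ∧
      (∀ x : Fin 3 → ℝ, x ≠ 0 → 0 < ∑ i, ∑ j, x i * sphMh h l i j * x j) := by
  refine ⟨contDiffOn_sphα h, fun l hl => ⟨fun i j => ?_, fun x hx => ?_⟩⟩
  · rw [sphMh_eq h hl, sphMh_eq h hl, sphG_comm l i j, mul_comm (sin (l i) ^ (h + 1))]
  have h0 := sin_pos_of_mem hl 0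
  have h1 := sin_pos_of_mem hl 1
  have h2 := sin_pos_of_mem hl 2
  have hD := sphGram_pos hl
  have hdet := sphG_det hl
  have hc : 0 < 1 - sphCos l 2 ^ 2 := by
    have := (sq_lt_one_iff_abs_lt_one _).2 (abs_lt.2 (sphCos_mem hl 2))
    linarith
  have hpos := quadForm_pos (a := sphCos l 0) (b := sphCos l 1) (c := sphCos l 2)
    (x := sin (l 0) ^ (h + 1) * x 0) (y := sin (l 1) ^ (h + 1) * x 1)
    (z := sin (l 2) ^ (h + 1) * x 2) hc (by rw [hdet]; positivity) (by
      rintro ⟨e0, e1, e2⟩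
      apply hx
      have p0 := (rpow_pos_of_pos h0 (h + 1)).ne'
      have p1 := (rpow_pos_of_pos h1 (h + 1)).ne'
      have p2 := (rpow_pos_of_pos h2 (h + 1)).ne'
      ext i
      fin_cases i
      · simpa [p0] using e0
      · simpa [p1] using e1
      · simpa [p2] using e2)
  have hK : 0 < (√(sphGram l) / (sin (l 0) * sin (l 1) * sin (l 2))) ^ h / √(sphGram l) := by
    positivity
  have g01 : sphG l 0 1 = -sphCos l 2 := rfl
  have g02 : sphG l 0 2 = -sphCos l 1 := rfl
  have g12 : sphG l 1 2 = -sphCos l 0 := rfl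
  have gd : ∀ i, sphG l i i = 1 := fun i => if_pos rfl
  refine (mul_pos hK hpos).trans_eq ?_
  simp only [sphMh_eq h hl, Fin.sum_univ_three, sphG_comm l 1 0, sphG_comm l 2 0, sphG_comm l 2 1,
    g01, g02, g12, gd]
  ring
end
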